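/- arXiv:2006.12405 — 2 statements merged into one kernel-verified Lean document; each statement's English description precedes it below -/
import Mathlib

section
/- Let 𝒜 be a unital C*-algebra, 𝒮 ⊆ 𝒜 an operator system, and n a positive integer. Every positive linear map ψ: 𝒮 → M_n(ℂ) is decomposable if and only if J_n(𝒮) is contained in the closure of the cone 𝒮⁺ ⊗ M_n(ℂ)⁺ in M_n(𝒜). -/
/-!
The proof rests on the duality `φ ↦ s_φ`, `s_φ(x) = ∑ i j, φ(x i j) i j`, between linear maps
`S → Mₙ(ℂ)` and functionals on `Mₙ(S)`. The inverse passage, from functionals on `Mₙ(𝒜)` to maps, is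
`mapOfFunctional`. Positive maps correspond to functionals that are nonnegative on `S⁺ ⊗ Mₙ(ℂ)⁺`, and
positive functionals on `Mₙ(𝒜)` yield completely positive maps (`isCPMap_mapOfFunctional`).

If every positive map is decomposable, then a point of `Jₙ(S)` outside the closed cone is separated
from the cone by a functional; the associated map is positive, hence `ψ + η` with `ψ` completely
positive and `η` co-completely positive. Both `s_ψ` and `s_η` are nonnegative on `Jₙ(S)`, which
contradicts the separation (`mem_closure_of_forall_decomposable`).

Conversely, let `φ` be positive. Then `s_φ` is continuous, because positive maps on operator systems
are bounded, so it is nonnegative on the closed cone and therefore on `Jₙ(S)`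
(`dualFunc_nonneg_of_mem_closure`). Equivalently, `(x, xᵀ) ↦ s_φ(x)` is a positive functional on the
self-adjoint unital subspace `{(x, xᵀ) : x ∈ Mₙ(S)}` of `Mₙ(𝒜) ⊕ Mₙ(𝒜)`. The M. Riesz extension theorem
extends it to a positive functional `(x, y) ↦ F₁ x + F₂ y`, and `s_φ(x) = F₁ x + F₂ xᵀ` is the desired
decomposition (`isDecomposable_of_dualFunc_nonneg`).
-/

open scoped ComplexOrder
open Matrix

/-- An element of a star ring is *positive* if it equals `star b * b` for some `b`;
in a (matrix algebra over a) C*-algebra this is the usual notion of positivity. -/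
def IsPosElem {R : Type*} [Ring R] [StarRing R] (x : R) : Prop :=
  ∃ b : R, x = star b * b

variable {A : Type*} [NormedRing A] [StarRing A] [CStarRing A]
  [CompleteSpace A] [NormedAlgebra ℂ A] [StarModule ℂ A]

/-- The canonical image in `Mₘ(𝒜)` of a matrix with entries in the operator system `S`. -/
def matCoe {S : Submodule ℂ A} {m : ℕ} (s : Matrix (Fin m) (Fin m) S) :
    Matrix (Fin m) (Fin m) A :=
  Matrix.of fun j k => (s j k : A)

/-- `J_m(S)`: matrices over `S` which are positive in `Mₘ(𝒜)` together with their
partial transpose. -/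
def memJ {S : Submodule ℂ A} {m : ℕ} (s : Matrix (Fin m) (Fin m) S) : Prop :=
  IsPosElem (matCoe s) ∧ IsPosElem (matCoe s)ᵀ

/-- A map `φ : S → Mₙ(ℂ)` is positive if it sends positive elements of `𝒜` lying in `S`
to positive semidefinite matrices. -/
def IsPosMap {S : Submodule ℂ A} {n : ℕ}
    (φ : S →ₗ[ℂ] Matrix (Fin n) (Fin n) ℂ) : Prop :=
  ∀ s : S, IsPosElem (s : A) → IsPosElem (φ s)

/-- Complete positivity of `φ : S → Mₙ(ℂ)`: every positive matrix over `S` is sent,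
entrywise, to a positive element of `Mₘ(Mₙ(ℂ))`. -/
def IsCPMap {S : Submodule ℂ A} {n : ℕ}
    (φ : S →ₗ[ℂ] Matrix (Fin n) (Fin n) ℂ) : Prop :=
  ∀ (m : ℕ) (s : Matrix (Fin m) (Fin m) S),
    IsPosElem (matCoe s) → IsPosElem (s.map ⇑φ)

/-- `φ` is co-completely positive if `transpose ∘ φ` is completely positive. -/
def IsCoCPMap {S : Submodule ℂ A} {n : ℕ}
    (φ : S →ₗ[ℂ] Matrix (Fin n) (Fin n) ℂ) : Prop :=
  ∀ (m : ℕ) (s : Matrix (Fin m) (Fin m) S),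
    IsPosElem (matCoe s) → IsPosElem (s.map fun a => (φ a)ᵀ)

/-- `φ` is decomposable if it is the sum of a completely positive and a
co-completely positive map. -/
noncomputable def IsDecomposable {S : Submodule ℂ A} {n : ℕ}
    (φ : S →ₗ[ℂ] Matrix (Fin n) (Fin n) ℂ) : Prop :=
  ∃ ψ η : S →ₗ[ℂ] Matrix (Fin n) (Fin n) ℂ,
    IsCPMap ψ ∧ IsCoCPMap η ∧ φ = ψ + η

/-- The dual functional `s_φ` on `Mₙ(S)`, `s_φ([x_{ij}]) = ∑_{i,j} (φ(x_{ij}))_{ij}`. -/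
noncomputable def dualFunc {S : Submodule ℂ A} {n : ℕ}
    (φ : S →ₗ[ℂ] Matrix (Fin n) (Fin n) ℂ)
    (x : Matrix (Fin n) (Fin n) S) : ℂ :=
  ∑ i, ∑ j, φ (x i j) i j

/-- The cone `S⁺ ⊗ Mₙ(ℂ)⁺` inside `Mₙ(𝒜)`: finite sums `∑ sₗ ⊗ xₗ` with `sₗ ∈ S`
positive in `𝒜` and `xₗ` positive semidefinite. -/
def posCone (S : Submodule ℂ A) (n : ℕ) : Set (Matrix (Fin n) (Fin n) A) :=
  { T | ∃ (k : ℕ) (s : Fin k → A) (x : Fin k → Matrix (Fin n) (Fin n) ℂ),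
      (∀ l, s l ∈ S ∧ IsPosElem (s l)) ∧ (∀ l, IsPosElem (x l)) ∧
      T = ∑ l, Matrix.of fun p q => x l p q • s l }

set_option linter.unusedSectionVars false

/-! ### Positive elements in C⋆-algebras and matrix algebras -/

section CStar

variable {B : Type*} [CStarAlgebra B]

lemma IsPosElem.star_eq {R : Type*} [Ring R] [StarRing R] {x : R} (hx : IsPosElem x) :
    star x = x := by
  obtain ⟨b, rfl⟩ := hx
  simp

lemma isPosElem_zero {R : Type*} [Ring R] [StarRing R] : IsPosElem (0 : R) := ⟨0, by simp⟩

lemma isPosElem_add_cstar {x y : B} (hx : IsPosElem x) (hy : IsPosElem y) :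
    IsPosElem (x + y) := by
  let _ := CStarAlgebra.spectralOrder B
  have _ := CStarAlgebra.spectralOrderedRing B
  exact CStarAlgebra.nonneg_iff_eq_star_mul_self.mp
    (add_nonneg (CStarAlgebra.nonneg_iff_eq_star_mul_self.mpr hx)
      (CStarAlgebra.nonneg_iff_eq_star_mul_self.mpr hy))

lemma isPosElem_norm_add_cstar {h : B} (hh : star h = h) :
    IsPosElem ((‖h‖ : ℂ) • (1 : B) + h) := by
  let _ := CStarAlgebra.spectralOrder B
  have _ := CStarAlgebra.spectralOrderedRing B
  have hsa : IsSelfAdjoint (-h) := by simp [IsSelfAdjoint, hh]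
  have := IsSelfAdjoint.le_algebraMap_norm_self hsa
  rw [norm_neg, neg_le_iff_add_nonneg, Algebra.algebraMap_eq_smul_one, ← Complex.coe_smul] at this
  exact CStarAlgebra.nonneg_iff_eq_star_mul_self.mp this

end CStar

/-- The unbundled C⋆-algebra structure on `A`, in bundled form. -/
abbrev bundledCStar (A : Type*) [NormedRing A] [StarRing A] [CStarRing A]
    [CompleteSpace A] [NormedAlgebra ℂ A] [StarModule ℂ A] : CStarAlgebra A where

lemma isPosElem_norm_add {h : A} (hh : star h = h) :
    IsPosElem ((‖h‖ : ℂ) • (1 : A) + h) :=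
  letI := bundledCStar A
  isPosElem_norm_add_cstar hh

lemma IsPosElem.matrix_add {m : ℕ} {x y : Matrix (Fin m) (Fin m) A}
    (hx : IsPosElem x) (hy : IsPosElem y) : IsPosElem (x + y) := by
  let _ := bundledCStar A
  let _ := CStarAlgebra.spectralOrder A
  have _ := CStarAlgebra.spectralOrderedRing A
  exact isPosElem_add_cstar (B := CStarMatrix (Fin m) (Fin m) A) hx hy

lemma IsPosElem.real_smul {R : Type*} [Ring R] [StarRing R] [Algebra ℂ R] [StarModule ℂ R]
    {x : R} (hx : IsPosElem x) {c : ℝ} (hc : 0 ≤ c) : IsPosElem ((c : ℂ) • x) := by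
  obtain ⟨b, rfl⟩ := hx
  refine ⟨((√c : ℝ) : ℂ) • b, ?_⟩
  rw [star_smul, smul_mul_smul_comm]
  congr 1
  rw [Complex.star_def, Complex.conj_ofReal, ← Complex.ofReal_mul, Real.mul_self_sqrt hc]

/-- The unit is an order unit of `Mₘ(𝒜)`: Hermitian elements become positive after adding
any large multiple of it. -/
lemma exists_forall_isPosElem_smul_one_add {m : ℕ} {h : Matrix (Fin m) (Fin m) A}
    (hh : star h = h) :
    ∃ c : ℝ, ∀ d, c ≤ d → IsPosElem ((d : ℂ) • (1 : Matrix (Fin m) (Fin m) A) + h) := by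
  let _ := bundledCStar A
  let _ := CStarAlgebra.spectralOrder A
  have _ := CStarAlgebra.spectralOrderedRing A
  obtain ⟨c, hc⟩ : ∃ c : ℝ, IsPosElem ((c : ℂ) • (1 : Matrix (Fin m) (Fin m) A) + h) :=
    ⟨_, isPosElem_norm_add_cstar (B := CStarMatrix (Fin m) (Fin m) A) hh⟩
  refine ⟨c, fun d hd => ?_⟩
  have h1 : IsPosElem (1 : Matrix (Fin m) (Fin m) A) := ⟨1, by simp⟩
  have := (h1.real_smul (sub_nonneg.mpr hd)).matrix_add hc
  rwa [← add_assoc, ← add_smul, Complex.ofReal_sub, sub_add_cancel] at this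

/-- For rectangular `c`, the matrix `cᴴ * c` is the sum over the rows of `c` of `star r * r`, where
`r` is the square matrix having that row on top and zeros elsewhere. -/
lemma isPosElem_conjTranspose_mul_self {m n : ℕ} (hn : 0 < n)
    (c : Matrix (Fin m) (Fin n) A) : IsPosElem (cᴴ * c) := by
  have key : cᴴ * c = ∑ k, star (Matrix.of fun p q : Fin n => if p = ⟨0, hn⟩ then c k q else 0) *
      (Matrix.of fun p q : Fin n => if p = ⟨0, hn⟩ then c k q else 0) := by
    ext p q
    simp [Matrix.mul_apply, Matrix.sum_apply, Matrix.star_apply, apply_ite]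
  rw [key]
  exact Finset.sum_induction _ IsPosElem (fun _ _ => IsPosElem.matrix_add) isPosElem_zero
    fun k _ => ⟨_, rfl⟩

lemma isPosElem_iff_posSemidef {ι : Type*} [Fintype ι] [DecidableEq ι] (x : Matrix ι ι ℂ) :
    IsPosElem x ↔ x.PosSemidef := by
  constructor
  · rintro ⟨b, rfl⟩
    exact Matrix.posSemidef_conjTranspose_mul_self b
  · intro h
    open scoped MatrixOrder in
    exact CStarAlgebra.nonneg_iff_eq_star_mul_self.mp h.nonneg

/-- Positivity in `Mₘ(Mₙ(ℂ))` is positive semidefiniteness of the flattened scalar matrix. -/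
lemma isPosElem_comp_iff {m n : ℕ} (x : Matrix (Fin m) (Fin m) (Matrix (Fin n) (Fin n) ℂ)) :
    IsPosElem x ↔ (Matrix.comp _ _ _ _ _ x).PosSemidef := by
  rw [← isPosElem_iff_posSemidef]
  have hstar (b : Matrix (Fin m) (Fin m) (Matrix (Fin n) (Fin n) ℂ)) :
      Matrix.compRingEquiv _ _ _ (star b) = star (Matrix.compRingEquiv _ _ _ b) := by
    ext ⟨i, p⟩ ⟨j, q⟩
    simp [Matrix.star_apply]
  constructor
  · rintro ⟨b, rfl⟩
    refine ⟨Matrix.compRingEquiv _ _ _ b, ?_⟩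
    rw [← hstar, ← map_mul, Matrix.compRingEquiv_apply]
  · rintro ⟨b, hb⟩
    refine ⟨(Matrix.compRingEquiv _ _ _).symm b, (Matrix.compRingEquiv _ _ _).injective ?_⟩
    rw [map_mul, hstar, RingEquiv.apply_symm_apply, ← hb, Matrix.compRingEquiv_apply]

/-! ### Functionals on matrices and maps into matrices -/

/-- Over `ℂ`, nonnegativity of the quadratic form already forces the matrix to be Hermitian. -/
lemma posSemidef_of_dotProduct_nonneg {ι : Type*} [Fintype ι] [DecidableEq ι] {M : Matrix ι ι ℂ}
    (h : ∀ v : ι → ℂ, 0 ≤ star v ⬝ᵥ (M *ᵥ v)) : M.PosSemidef := by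
  rw [← Matrix.isPositive_toEuclideanLin_iff, LinearMap.isPositive_iff_complex]
  intro x
  have hx : 0 ≤ inner ℂ (M.toEuclideanLin x) x := by
    rw [← inner_conj_symm, EuclideanSpace.inner_eq_star_dotProduct,
      Matrix.ofLp_toLpLin, Matrix.toLin'_apply, dotProduct_comm]
    exact star_nonneg_iff.mpr (h _)
  obtain ⟨h1, h2⟩ := Complex.nonneg_iff.mp hx
  exact ⟨Complex.ext (by simp) (by simpa using h2), by simpa using h1⟩

/-- The map `𝒜 → Mₙ(ℂ)` attached to a functional `F` on `Mₙ(𝒜)`, with `(i, j)` entry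
`a ↦ F (a ⊗ e_{ij})`. It is inverse to forming the dual functional. -/
noncomputable def mapOfFunctional {n : ℕ} (F : Matrix (Fin n) (Fin n) A →ₗ[ℂ] ℂ) :
    A →ₗ[ℂ] Matrix (Fin n) (Fin n) ℂ where
  toFun a := Matrix.of fun i j => F (Matrix.single i j a)
  map_add' a b := by ext i j; simp [Matrix.single_add]
  map_smul' c a := by ext i j; simp [← Matrix.smul_single]

lemma functional_eq_sum {n : ℕ} (F : Matrix (Fin n) (Fin n) A →ₗ[ℂ] ℂ)
    (x : Matrix (Fin n) (Fin n) A) : F x = ∑ p, ∑ q, mapOfFunctional F (x p q) p q := by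
  conv_lhs => rw [Matrix.matrix_eq_sum_single x]
  simp [mapOfFunctional]

/-- A functional which is positive on all of `Mₙ(𝒜)` gives a completely positive map: the quadratic
form of `[φ (s j k)]` at `w` is `F (Vᴴ s V)`, where `V` is the scalar `m × n` matrix with the entries
of `w`. -/
lemma isCPMap_mapOfFunctional {n : ℕ} (hn : 0 < n) (S : Submodule ℂ A)
    (F : Matrix (Fin n) (Fin n) A →ₗ[ℂ] ℂ) (hF : ∀ x, IsPosElem x → 0 ≤ F x) :
    IsCPMap ((mapOfFunctional F).domRestrict S) := by
  rintro m s ⟨b, hb⟩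
  rw [isPosElem_comp_iff]
  refine posSemidef_of_dotProduct_nonneg fun w => ?_
  let V : Matrix (Fin m) (Fin n) A := Matrix.of fun j p => algebraMap ℂ A (w (j, p))
  have hpos := hF _ (isPosElem_conjTranspose_mul_self hn (b * V))
  have hentry (p q : Fin n) : ((b * V)ᴴ * (b * V)) p q =
      ∑ j, ∑ k, (star (w (j, p)) * w (k, q)) • (s j k : A) := by
    have : (b * V)ᴴ * (b * V) = Vᴴ * (matCoe s * V) := by
      rw [hb, Matrix.conjTranspose_mul, Matrix.star_eq_conjTranspose]
      simp only [Matrix.mul_assoc]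
    rw [this, Matrix.mul_apply]
    refine Finset.sum_congr rfl fun j _ => ?_
    rw [Matrix.mul_apply, Finset.mul_sum]
    refine Finset.sum_congr rfl fun k _ => ?_
    simp only [V, matCoe, Matrix.conjTranspose_apply, Matrix.of_apply]
    rw [← algebraMap_star_comm, ← Algebra.commutes (w (k, q)), Algebra.smul_def, map_mul, mul_assoc]
  rw [functional_eq_sum] at hpos
  simp_rw [hentry, map_sum, map_smul, Matrix.sum_apply, Matrix.smul_apply] at hpos
  convert! hpos using 1
  simp only [dotProduct, Matrix.mulVec, Fintype.sum_prod_type, Matrix.comp_apply, Matrix.map_apply,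
    LinearMap.domRestrict_apply, Pi.star_apply, smul_eq_mul, Finset.mul_sum]
  rw [Finset.sum_comm]
  refine Finset.sum_congr rfl fun p _ => ?_
  rw [Finset.sum_comm (s := (Finset.univ : Finset (Fin n)))]
  refine Finset.sum_congr rfl fun j _ => ?_
  rw [Finset.sum_comm]
  refine Finset.sum_congr rfl fun q _ => Finset.sum_congr rfl fun k _ => ?_
  ring

/-- The quadratic form of `φ a` at `v` is the value of `F` at `a ⊗ [conj (v p) * v q]`, an element
of the cone `S⁺ ⊗ Mₙ(ℂ)⁺`. -/
lemma isPosMap_mapOfFunctional {n : ℕ} (S : Submodule ℂ A)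
    (F : Matrix (Fin n) (Fin n) A →ₗ[ℂ] ℂ) (hF : ∀ x ∈ posCone S n, 0 ≤ F x) :
    IsPosMap ((mapOfFunctional F).domRestrict S) := by
  intro a ha
  rw [isPosElem_iff_posSemidef]
  refine posSemidef_of_dotProduct_nonneg fun v => ?_
  have hpos := hF (Matrix.of fun p q => (star (v p) * v q) • (a : A))
    ⟨1, fun _ => a, fun _ => Matrix.vecMulVec (star v) v, fun _ => ⟨a.2, ha⟩, fun _ => by
      rw [isPosElem_iff_posSemidef]
      exact Matrix.posSemidef_vecMulVec_star_self v, by ext; simp [Matrix.vecMulVec_apply]⟩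
  rw [functional_eq_sum] at hpos
  convert! hpos using 1
  simp only [dotProduct, Matrix.mulVec, Finset.mul_sum, Matrix.of_apply, map_smul,
    Matrix.smul_apply, smul_eq_mul, LinearMap.domRestrict_apply, Pi.star_apply]
  refine Finset.sum_congr rfl fun p _ => Finset.sum_congr rfl fun q _ => ?_
  ring

/-- The dual functional of a completely positive map is nonnegative on positive matrices: it is
the quadratic form of `[ψ (s i j)]` at the vector `∑ i, e_i ⊗ e_i`. -/
lemma IsCPMap.sum_nonneg {S : Submodule ℂ A} {n : ℕ} {ψ : S →ₗ[ℂ] Matrix (Fin n) (Fin n) ℂ}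
    (h : IsCPMap ψ) {s : Matrix (Fin n) (Fin n) S} (hs : IsPosElem (matCoe s)) :
    0 ≤ ∑ i, ∑ j, ψ (s i j) i j := by
  have h1 := ((isPosElem_comp_iff _).mp (h n s hs)).dotProduct_mulVec_nonneg
    (fun jp => if jp.1 = jp.2 then 1 else 0)
  simpa [dotProduct, Matrix.mulVec, Fintype.sum_prod_type, apply_ite] using h1

/-! ### Hermiticity and continuity of positive maps -/

lemma IsPosMap.isHermitian {S : Submodule ℂ A} (h_one : (1 : A) ∈ S) {n : ℕ}
    {φ : S →ₗ[ℂ] Matrix (Fin n) (Fin n) ℂ} (hφ : IsPosMap φ) {a : S}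
    (ha : star (a : A) = a) : star (φ a) = φ a := by
  have h1 : IsPosElem (φ ⟨1, h_one⟩) := hφ _ ⟨1, by simp⟩
  have h2 : IsPosElem (φ ((‖(a : A)‖ : ℂ) • ⟨1, h_one⟩ + a)) := hφ _ (isPosElem_norm_add ha)
  have := h2.star_eq
  rw [map_add, map_smul, star_add, star_smul, h1.star_eq] at this
  simpa using this

lemma IsPosMap.map_star {S : Submodule ℂ A} (h_one : (1 : A) ∈ S) (h_star : ∀ a ∈ S, star a ∈ S)
    {n : ℕ} {φ : S →ₗ[ℂ] Matrix (Fin n) (Fin n) ℂ} (hφ : IsPosMap φ) (a : S) :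
    φ ⟨star (a : A), h_star a a.2⟩ = star (φ a) := by
  have h1 := hφ.isHermitian h_one (a := a + ⟨star (a : A), h_star a a.2⟩) (by simp [add_comm])
  have h2 := hφ.isHermitian h_one (a := Complex.I • (a - ⟨star (a : A), h_star a a.2⟩))
    (by simp [smul_sub, neg_add_eq_sub])
  rw [map_add, star_add] at h1
  rw [map_smul, map_sub, star_smul, star_sub] at h2
  generalize φ ⟨star (a : A), h_star a a.2⟩ = y at *
  ext i j
  have e1 := congrFun (congrFun h1 i) j
  have e2 := congrFun (congrFun h2 i) j
  simp only [Matrix.add_apply, Matrix.smul_apply, Matrix.sub_apply, smul_eq_mul, Complex.star_def,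
    Complex.conj_I] at e1 e2
  linear_combination (-(1 / 2) : ℂ) * e1 - (Complex.I / 2) * e2 -
    (star (φ a) i j - star y i j + φ a i j - y i j) / 2 * Complex.I_mul_I

lemma IsPosElem.norm_entry_le {n : ℕ} {P : Matrix (Fin n) (Fin n) ℂ} (hP : IsPosElem P)
    (i j : Fin n) : ‖P i j‖ ≤ (P i i).re + (P j j).re := by
  obtain ⟨B, rfl⟩ := hP
  have hd (i : Fin n) : ((star B * B) i i).re = ∑ k, ‖B k i‖ ^ 2 := by
    simp [Matrix.mul_apply, Matrix.star_apply, ← Complex.normSq_eq_norm_sq, Complex.normSq_apply]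
  rw [hd, hd, ← Finset.sum_add_distrib, Matrix.mul_apply]
  refine norm_sum_le_of_le _ fun k _ => ?_
  rw [norm_mul, Matrix.star_apply, norm_star]
  nlinarith [sq_nonneg (‖B k i‖ - ‖B k j‖), sq_nonneg (‖B k i‖), sq_nonneg (‖B k j‖)]

/-- Since `-‖a‖ ≤ a ≤ ‖a‖`, both matrices `‖a‖ φ(1) ± φ(a)` are positive; half the difference of
their entries is the corresponding entry of `φ a`. -/
lemma IsPosMap.norm_entry_le {S : Submodule ℂ A} (h_one : (1 : A) ∈ S) {n : ℕ}
    {φ : S →ₗ[ℂ] Matrix (Fin n) (Fin n) ℂ} (hφ : IsPosMap φ) {a : S}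
    (ha : star (a : A) = a) (i j : Fin n) :
    ‖φ a i j‖ ≤ ((φ ⟨1, h_one⟩ i i).re + (φ ⟨1, h_one⟩ j j).re) * ‖a‖ := by
  have hp := (hφ ((‖(a : A)‖ : ℂ) • ⟨1, h_one⟩ + a) (isPosElem_norm_add ha)).norm_entry_le i j
  have hm := (hφ ((‖(a : A)‖ : ℂ) • ⟨1, h_one⟩ + -a) (by
    simpa using isPosElem_norm_add (h := -(a : A)) (by simp [ha]))).norm_entry_le i j
  have h2 : φ a i j + φ a i j = φ ((‖(a : A)‖ : ℂ) • ⟨1, h_one⟩ + a) i j -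
      φ ((‖(a : A)‖ : ℂ) • ⟨1, h_one⟩ + -a) i j := by
    simp
  have h3 := norm_sub_le (φ ((‖(a : A)‖ : ℂ) • ⟨1, h_one⟩ + a) i j)
    (φ ((‖(a : A)‖ : ℂ) • ⟨1, h_one⟩ + -a) i j)
  rw [← h2, ← two_mul, norm_mul, Complex.norm_ofNat] at h3
  simp only [map_add, map_smul, map_neg, Matrix.add_apply, Matrix.smul_apply, Matrix.neg_apply,
    smul_eq_mul, Complex.add_re, Complex.neg_re, Complex.re_ofReal_mul] at hp hm h3
  rw [show ‖a‖ = ‖(a : A)‖ from rfl]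
  linarith

/-- Positive maps on an operator system are automatically bounded, hence continuous. -/
lemma IsPosMap.continuous_entry {S : Submodule ℂ A} (h_one : (1 : A) ∈ S)
    (h_star : ∀ a ∈ S, star a ∈ S) {n : ℕ}
    {φ : S →ₗ[ℂ] Matrix (Fin n) (Fin n) ℂ} (hφ : IsPosMap φ) (i j : Fin n) :
    Continuous fun a => φ a i j := by
  set C := (φ ⟨1, h_one⟩ i i).re + (φ ⟨1, h_one⟩ j j).re with hC
  have hC0 : 0 ≤ C := (norm_nonneg _).trans
    ((hφ ⟨1, h_one⟩ ⟨1, by simp⟩).norm_entry_le i j)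
  let f : S →ₗ[ℂ] ℂ := (Matrix.entryLinearMap ℂ ℂ i j) ∘ₗ φ
  refine (f.mkContinuous (2 * C) fun a => ?_).continuous
  let a' : S := ⟨star (a : A), h_star a a.2⟩
  have ha' : ‖a'‖ = ‖a‖ := norm_star (a : A)
  have h1 := hφ.norm_entry_le h_one (a := a + a') (by simp [a', add_comm]) i j
  have h2 := hφ.norm_entry_le h_one (a := Complex.I • (a - a')) (by simp [a', smul_sub, neg_add_eq_sub]) i j
  rw [← hC] at h1 h2
  have h3 := norm_add_le (φ (a + a') i j) (φ (a - a') i j)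
  have h4 : φ (a + a') i j + φ (a - a') i j = 2 * φ a i j := by simp; ring
  have h5 : ‖φ (Complex.I • (a - a')) i j‖ = ‖φ (a - a') i j‖ := by simp
  rw [h4, norm_mul, Complex.norm_ofNat] at h3
  rw [h5, norm_smul, Complex.norm_I, one_mul] at h2
  have h6 : ‖a + a'‖ ≤ 2 * ‖a‖ := (norm_add_le _ _).trans (by rw [ha']; linarith)
  have h7 : ‖a - a'‖ ≤ 2 * ‖a‖ := (norm_sub_le _ _).trans (by rw [ha']; linarith)
  have h8 := mul_le_mul_of_nonneg_left h6 hC0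
  have h9 := mul_le_mul_of_nonneg_left h7 hC0
  change ‖φ a i j‖ ≤ _
  linarith

/-! ### Complexification and separation from the cone -/

/-- If the real functional `g` vanishes on skew-adjoint elements, its complexification
`x ↦ g x - i g (i x)` agrees with `g` on self-adjoint elements. -/
lemma extendRCLike_of_star_eq {n : ℕ} (g : Module.Dual ℝ (Matrix (Fin n) (Fin n) A))
    (hg : ∀ x, star x = -x → g x = 0) {x : Matrix (Fin n) (Fin n) A} (hx : star x = x) :
    (g.extendRCLike x : ℂ) = (g x : ℂ) := by
  have hI : g (Complex.I • x) = 0 := hg _ (by simp [hx])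
  rw [Module.Dual.extendRCLike_apply]
  change (g x : ℂ) - Complex.I * (g (Complex.I • x) : ℂ) = _
  simp [hI]

lemma extendRCLike_nonneg {n : ℕ} (g : Module.Dual ℝ (Matrix (Fin n) (Fin n) A))
    (hg : ∀ x, IsPosElem (x + star x) → 0 ≤ g x) {x : Matrix (Fin n) (Fin n) A}
    (hx : IsPosElem x) : 0 ≤ (g.extendRCLike x : ℂ) := by
  rw [extendRCLike_of_star_eq g _ hx.star_eq]
  · refine Complex.zero_le_real.mpr (hg x ?_)
    rw [hx.star_eq]
    exact hx.matrix_add hx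
  · intro y hy
    refine le_antisymm ?_ (hg y (by simp [hy, isPosElem_zero]))
    have := hg (-y) (by simp [hy, isPosElem_zero])
    rwa [map_neg, Left.nonneg_neg_iff] at this

/-- The cone `S⁺ ⊗ Mₙ(ℂ)⁺` as a pointed convex cone. -/
def posConePointed (S : Submodule ℂ A) (n : ℕ) : PointedCone ℝ (Matrix (Fin n) (Fin n) A) where
  carrier := posCone S n
  zero_mem' := ⟨0, Fin.elim0, Fin.elim0, fun l => l.elim0, fun l => l.elim0, by simp⟩
  add_mem' := by
    rintro _ _ ⟨k, s, x, hs, hx, rfl⟩ ⟨k', s', x', hs', hx', rfl⟩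
    refine ⟨k + k', Fin.append s s', Fin.append x x', fun l => ?_, fun l => ?_, ?_⟩
    · refine Fin.addCases (fun l => ?_) (fun l => ?_) l
      · simpa using hs l
      · simpa using hs' l
    · refine Fin.addCases (fun l => ?_) (fun l => ?_) l
      · simpa using hx l
      · simpa using hx' l
    · simp [Fin.sum_univ_add]
  smul_mem' := by
    rintro ⟨c, hc⟩ _ ⟨k, s, x, hs, hx, rfl⟩
    refine ⟨k, s, fun l => (c : ℂ) • x l, hs, fun l => (hx l).real_smul hc, ?_⟩
    rw [Finset.smul_sum]
    refine Finset.sum_congr rfl fun l _ => ?_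
    ext p q
    change c • (x l p q • s l) = ((c : ℂ) • x l p q) • s l
    rw [smul_assoc, Complex.coe_smul]

lemma star_eq_of_mem_posCone {S : Submodule ℂ A} {n : ℕ} {T : Matrix (Fin n) (Fin n) A}
    (hT : T ∈ posCone S n) : star T = T := by
  obtain ⟨k, s, x, hs, hx, rfl⟩ := hT
  rw [star_sum]
  refine Finset.sum_congr rfl fun l _ => ?_
  ext p q
  rw [Matrix.star_apply, Matrix.of_apply, Matrix.of_apply, star_smul, (hs l).2.star_eq,
    ← Matrix.star_apply, (hx l).star_eq]

lemma IsCoCPMap.sum_nonneg {S : Submodule ℂ A} {n : ℕ} {η : S →ₗ[ℂ] Matrix (Fin n) (Fin n) ℂ}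
    (h : IsCoCPMap η) {s : Matrix (Fin n) (Fin n) S} (hs : IsPosElem (matCoe s)ᵀ) :
    0 ≤ ∑ i, ∑ j, η (s i j) i j := by
  have h' : IsCPMap ((Matrix.transposeLinearEquiv (Fin n) (Fin n) ℂ ℂ).toLinearMap ∘ₗ η) := h
  have := h'.sum_nonneg (s := sᵀ) hs
  rw [Finset.sum_comm]
  exact this

/-- A point of `Jₙ(S)` outside the closed cone would be separated from it by a real functional
that is nonnegative on the cone; symmetrised and complexified, this is the dual functional of a
positive map, and a decomposition of that map makes it nonnegative on `Jₙ(S)`. -/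
lemma mem_closure_of_forall_decomposable (S : Submodule ℂ A) (n : ℕ)
    (h : ∀ ψ : S →ₗ[ℂ] Matrix (Fin n) (Fin n) ℂ, IsPosMap ψ → IsDecomposable ψ)
    (s : Matrix (Fin n) (Fin n) S) (hs : memJ s) : matCoe s ∈ closure (posCone S n) := by
  by_contra hcon
  let _ : LocallyConvexSpace ℝ (Matrix (Fin n) (Fin n) A) :=
    inferInstanceAs (LocallyConvexSpace ℝ (Fin n → Fin n → A))
  obtain ⟨f, hf, hfs⟩ := ProperCone.hyperplane_separation_point
    (C := Submodule.closure (posConePointed S n)) (x₀ := matCoe s) hcon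
  have hf' : ∀ x ∈ posCone S n, 0 ≤ f x := fun x hx => hf x (subset_closure hx)
  -- Symmetrising kills the skew-adjoint part, so that the complexification is real on Hermitian
  -- elements.
  let g : Module.Dual ℝ (Matrix (Fin n) (Fin n) A) :=
    { toFun := fun x => f x + f (star x)
      map_add' := fun x y => by rw [star_add, map_add, map_add]; ring
      map_smul' := fun c x => by
        have : star (c • x) = c • star x := by
          rw [← Complex.coe_smul, ← Complex.coe_smul, star_smul, Complex.star_def,
            Complex.conj_ofReal]
        rw [this, map_smul, map_smul, ← smul_add, RingHom.id_apply] }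
  have hg (x) : g x = f x + f (star x) := rfl
  have hskew (x) (hx : star x = -x) : g x = 0 := by simp [hg, hx]
  let F : Matrix (Fin n) (Fin n) A →ₗ[ℂ] ℂ := g.extendRCLike
  have hF {x} (hx : star x = x) : F x = ((2 * f x : ℝ) : ℂ) := by
    rw [two_mul]
    have := extendRCLike_of_star_eq g hskew hx
    rwa [hg, hx] at this
  obtain ⟨ψ, η, hψ, hη, heq⟩ := h _ (isPosMap_mapOfFunctional S F fun x hx => by
    rw [hF (star_eq_of_mem_posCone hx)]
    exact Complex.zero_le_real.mpr (mul_nonneg zero_le_two (hf' x hx)))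
  have hFs : F (matCoe s) = ∑ i, ∑ j, ψ (s i j) i j + ∑ i, ∑ j, η (s i j) i j := by
    rw [functional_eq_sum, ← Finset.sum_add_distrib]
    refine Finset.sum_congr rfl fun i _ => ?_
    rw [← Finset.sum_add_distrib]
    refine Finset.sum_congr rfl fun j _ => ?_
    have := congrFun (congrFun (LinearMap.congr_fun heq (s i j)) i) j
    exact this
  have hpos : 0 ≤ F (matCoe s) := by
    rw [hFs]
    exact add_nonneg (hψ.sum_nonneg hs.1) (hη.sum_nonneg hs.2)
  rw [hF hs.1.star_eq, Complex.zero_le_real] at hpos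
  linarith

/-! ### Nonnegativity on the closed cone and extension of functionals -/

lemma IsPosElem.sum_mul_nonneg {n : ℕ} {x y : Matrix (Fin n) (Fin n) ℂ} (hx : IsPosElem x)
    (hy : IsPosElem y) : 0 ≤ ∑ p, ∑ q, x p q * y p q := by
  obtain ⟨B, rfl⟩ := hx
  have hy' := (isPosElem_iff_posSemidef y).mp hy
  have : ∑ p, ∑ q, (star B * B) p q * y p q = ∑ k, star (B k) ⬝ᵥ (y *ᵥ B k) := by
    simp only [dotProduct, Matrix.mulVec, Matrix.mul_apply, Matrix.star_apply, Finset.sum_mul,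
      Finset.mul_sum, Pi.star_apply]
    symm
    rw [Finset.sum_comm]
    refine Finset.sum_congr rfl fun p _ => ?_
    rw [Finset.sum_comm]
    refine Finset.sum_congr rfl fun q _ => Finset.sum_congr rfl fun k _ => ?_
    ring
  rw [this]
  exact Finset.sum_nonneg fun k _ => hy'.dotProduct_mulVec_nonneg _

lemma isInducing_matCoe (S : Submodule ℂ A) (n : ℕ) :
    Topology.IsInducing (matCoe : Matrix (Fin n) (Fin n) S → Matrix (Fin n) (Fin n) A) :=
  Topology.IsInducing.piMap fun _ => Topology.IsInducing.piMap fun _ => .subtypeVal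

/-- The dual functional of a positive map is continuous and nonnegative on `S⁺ ⊗ Mₙ(ℂ)⁺`, hence
nonnegative on the part of the closure that lies in `Mₙ(S)`. -/
lemma dualFunc_nonneg_of_mem_closure {S : Submodule ℂ A} (h_one : (1 : A) ∈ S)
    (h_star : ∀ a ∈ S, star a ∈ S) {n : ℕ} {φ : S →ₗ[ℂ] Matrix (Fin n) (Fin n) ℂ}
    (hφ : IsPosMap φ) {s : Matrix (Fin n) (Fin n) S} (hs : matCoe s ∈ closure (posCone S n)) :
    0 ≤ dualFunc φ s := by
  have hcont : Continuous (dualFunc φ) := by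
    unfold dualFunc
    refine continuous_finsetSum _ fun i _ => continuous_finsetSum _ fun j _ => ?_
    exact (hφ.continuous_entry h_one h_star i j).comp (continuous_apply_apply i j)
  have hclosed : IsClosed {s | 0 ≤ dualFunc φ s} := isClosed_le continuous_const hcont
  have himage : matCoe '' (matCoe ⁻¹' posCone S n : Set (Matrix (Fin n) (Fin n) S)) =
      posCone S n := by
    rw [Set.image_preimage_eq_iff]
    rintro _ ⟨k, t, x, ht, hx, rfl⟩
    refine ⟨Matrix.of fun p q => ∑ l, x l p q • ⟨t l, (ht l).1⟩, ?_⟩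
    ext p q
    simp [matCoe, Matrix.sum_apply]
  have hs' : s ∈ closure (matCoe ⁻¹' posCone S n) := by
    rw [(isInducing_matCoe S n).closure_eq_preimage_closure_image, himage]
    exact hs
  refine closure_minimal ?_ hclosed hs'
  rintro s ⟨k, t, x, ht, hx, hsum⟩
  have hentry (p q) : s p q = ∑ l, x l p q • (⟨t l, (ht l).1⟩ : S) := by
    have := congrFun (congrFun hsum p) q
    rw [Matrix.sum_apply] at this
    ext
    simpa [matCoe] using this
  have hval : dualFunc φ s = ∑ l, ∑ p, ∑ q, x l p q * φ ⟨t l, (ht l).1⟩ p q := by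
    unfold dualFunc
    simp_rw [hentry, map_sum, map_smul, Matrix.sum_apply, Matrix.smul_apply, smul_eq_mul]
    symm
    rw [Finset.sum_comm]
    refine Finset.sum_congr rfl fun p _ => ?_
    rw [Finset.sum_comm]
  change 0 ≤ dualFunc φ s
  rw [hval]
  exact Finset.sum_nonneg fun l _ => (hx l).sum_mul_nonneg (hφ _ (ht l).2)

/-- Pairs in `Mₙ(𝒜) ⊕ Mₙ(𝒜)` with positive real parts. Using real parts instead of positive pairs
keeps the unit an order unit of the whole real vector space and not only of its Hermitian part. -/
def accretiveCone (A : Type*) [NormedRing A] [StarRing A] [CStarRing A] [CompleteSpace A]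
    [NormedAlgebra ℂ A] [StarModule ℂ A] (n : ℕ) :
    PointedCone ℝ (Matrix (Fin n) (Fin n) A × Matrix (Fin n) (Fin n) A) where
  carrier := {p | IsPosElem (p.1 + star p.1) ∧ IsPosElem (p.2 + star p.2)}
  zero_mem' := by simp [isPosElem_zero]
  add_mem' := by
    rintro ⟨a, b⟩ ⟨c, d⟩ ⟨h1, h2⟩ ⟨h3, h4⟩
    constructor
    · simpa [add_add_add_comm] using h1.matrix_add h3
    · simpa [add_add_add_comm] using h2.matrix_add h4
  smul_mem' := by
    have key (c : ℝ) (hc : 0 ≤ c) (x : Matrix (Fin n) (Fin n) A) (hx : IsPosElem (x + star x)) :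
        IsPosElem (c • x + star (c • x)) := by
      have := hx.real_smul hc
      rwa [smul_add, ← Complex.conj_ofReal, ← Complex.star_def, ← star_smul, Complex.star_def,
        Complex.conj_ofReal, Complex.coe_smul] at this
    rintro ⟨c, hc⟩ ⟨x, y⟩ ⟨hx, hy⟩
    exact ⟨key c hc x hx, key c hc y hy⟩

/-- The pairs `(x, xᵀ)` with `x ∈ Mₙ(S)`, as a real subspace of `Mₙ(𝒜) ⊕ Mₙ(𝒜)`. -/
def transposeGraph (S : Submodule ℂ A) (n : ℕ) :
    Submodule ℝ (Matrix (Fin n) (Fin n) A × Matrix (Fin n) (Fin n) A) where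
  carrier := {p | (∀ i j, p.1 i j ∈ S) ∧ p.2 = p.1ᵀ}
  zero_mem' := by simp
  add_mem' := by
    rintro ⟨a, b⟩ ⟨c, d⟩ ⟨h1, h2⟩ ⟨h3, h4⟩
    exact ⟨fun i j => S.add_mem (h1 i j) (h3 i j), congrArg₂ (· + ·) h2 h4⟩
  smul_mem' := by
    rintro c ⟨x, y⟩ ⟨hx, hy⟩
    refine ⟨fun i j => ?_, congrArg (c • ·) hy⟩
    change c • x i j ∈ S
    rw [← Complex.coe_smul]
    exact S.smul_mem _ (hx i j)

/-- On the pairs `(x, xᵀ)` with `x ∈ Mₙ(S)` the functional `(x, xᵀ) ↦ Re s_φ(x)` is nonnegative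
wherever the pair has positive real parts, because then `x + x* ∈ Jₙ(S)`. The M. Riesz extension of
it to `Mₙ(𝒜) ⊕ Mₙ(𝒜)` splits as `F₁ x + F₂ y` with `F₁`, `F₂` positive, and these yield the completely
positive and the co-completely positive summand of `φ`. -/
lemma isDecomposable_of_dualFunc_nonneg {S : Submodule ℂ A} (h_one : (1 : A) ∈ S)
    (h_star : ∀ a ∈ S, star a ∈ S) {n : ℕ} (hn : 0 < n)
    {φ : S →ₗ[ℂ] Matrix (Fin n) (Fin n) ℂ} (hφ : IsPosMap φ)
    (hJ : ∀ s : Matrix (Fin n) (Fin n) S, memJ s → 0 ≤ dualFunc φ s) : IsDecomposable φ := by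
  -- A linear extension of `φ` to `A`, without any positivity, lets `s_φ` be written on all of `Mₙ(A)`.
  obtain ⟨φ', hφ'⟩ := φ.exists_extend
  have hext (a : S) : φ' a = φ a := LinearMap.congr_fun hφ' a
  let L : Matrix (Fin n) (Fin n) A →ₗ[ℂ] ℂ :=
    ∑ i, ∑ j, Matrix.entryLinearMap ℂ ℂ i j ∘ₗ φ' ∘ₗ Matrix.entryLinearMap ℂ A i j
  have hL (x) : L x = ∑ i, ∑ j, φ' (x i j) i j := by simp [L]
  have hLstar (x : Matrix (Fin n) (Fin n) A) (hx : ∀ i j, x i j ∈ S) : L (star x) = star (L x) := by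
    rw [hL, hL, star_sum, Finset.sum_comm]
    refine Finset.sum_congr rfl fun i _ => ?_
    rw [star_sum]
    refine Finset.sum_congr rfl fun j _ => ?_
    have := hφ.map_star h_one h_star ⟨x i j, hx i j⟩
    rw [← hext, ← hext] at this
    rw [Matrix.star_apply, this, Matrix.star_apply]
  obtain ⟨g, hgf, hgK⟩ := riesz_extension (accretiveCone A n)
    ⟨transposeGraph S n, (Complex.reLm ∘ₗ L.restrictScalars ℝ ∘ₗ
      LinearMap.fst ℝ (Matrix (Fin n) (Fin n) A) (Matrix (Fin n) (Fin n) A)).domRestrict _⟩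
    (by
      rintro ⟨⟨x, y⟩, hx, hxy⟩ ⟨h1, h2⟩
      change 0 ≤ (L x).re
      have hy : y = xᵀ := hxy
      subst hy
      have := hJ (Matrix.of fun i j => ⟨x i j + star (x j i),
        S.add_mem (hx i j) (h_star _ (hx j i))⟩) ⟨h1, h2⟩
      have hval : dualFunc φ (Matrix.of fun i j => ⟨x i j + star (x j i),
          S.add_mem (hx i j) (h_star _ (hx j i))⟩) = L x + star (L x) := by
        rw [← hLstar x hx, ← map_add, hL]
        simp only [dualFunc, ← hext]
        rfl
      rw [hval] at this
      have := (Complex.nonneg_iff.mp this).1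
      simp only [Complex.add_re, Complex.star_def, Complex.conj_re] at this
      linarith)
    (by
      rintro ⟨x, y⟩
      obtain ⟨c, hc⟩ := exists_forall_isPosElem_smul_one_add (h := x + star x)
        (by simp [add_comm])
      obtain ⟨d, hd⟩ := exists_forall_isPosElem_smul_one_add (h := y + star y)
        (by simp [add_comm])
      let e : ℝ := max c d
      let u : Matrix (Fin n) (Fin n) A := ((e / 2 : ℝ) : ℂ) • 1
      have hu (z : Matrix (Fin n) (Fin n) A) :
          u + z + star (u + z) = (e : ℂ) • 1 + (z + star z) := by
        have : star u = u := by
          rw [star_smul, Complex.star_def, Complex.conj_ofReal, star_one]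
        rw [star_add, this, add_add_add_comm, ← add_smul, ← Complex.ofReal_add, add_halves]
      refine ⟨⟨⟨u, u⟩, fun i j => ?_, ?_⟩, ?_, ?_⟩
      · change ((e / 2 : ℝ) : ℂ) • (1 : Matrix (Fin n) (Fin n) A) i j ∈ S
        refine S.smul_mem _ ?_
        rw [Matrix.one_apply]
        split_ifs
        exacts [h_one, S.zero_mem]
      · simp [u]
      · change IsPosElem (u + x + star (u + x))
        rw [hu]
        exact hc _ (le_max_left _ _)
      · change IsPosElem (u + y + star (u + y))
        rw [hu]
        exact hd _ (le_max_right _ _))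
  let g₁ : Module.Dual ℝ (Matrix (Fin n) (Fin n) A) := g ∘ₗ LinearMap.inl ℝ _ _
  let g₂ : Module.Dual ℝ (Matrix (Fin n) (Fin n) A) := g ∘ₗ LinearMap.inr ℝ _ _
  let F₁ : Matrix (Fin n) (Fin n) A →ₗ[ℂ] ℂ := g₁.extendRCLike
  let F₂ : Matrix (Fin n) (Fin n) A →ₗ[ℂ] ℂ := g₂.extendRCLike
  have hF₁ : ∀ x, IsPosElem x → 0 ≤ F₁ x := fun x => extendRCLike_nonneg g₁ fun y hy =>
    hgK _ ⟨hy, by simp [isPosElem_zero]⟩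
  have hF₂ : ∀ x, IsPosElem x → 0 ≤ F₂ x := fun x => extendRCLike_nonneg g₂ fun y hy =>
    hgK _ ⟨by simp [isPosElem_zero], hy⟩
  have hre (x : Matrix (Fin n) (Fin n) A) (hx : ∀ i j, x i j ∈ S) :
      (L x).re = (F₁ x + F₂ xᵀ).re := by
    have h1 : (F₁ x).re = g (x, 0) := Module.Dual.re_extendRCLike_apply (𝕜 := ℂ) g₁ x
    have h2 : (F₂ xᵀ).re = g (0, xᵀ) := Module.Dual.re_extendRCLike_apply (𝕜 := ℂ) g₂ xᵀ
    have h3 : g (x, xᵀ) = (L x).re := hgf ⟨(x, xᵀ), hx, rfl⟩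
    rw [Complex.add_re, h1, h2, ← map_add, ← h3]
    simp
  have hsum (x : Matrix (Fin n) (Fin n) A) (hx : ∀ i j, x i j ∈ S) : L x = F₁ x + F₂ xᵀ := by
    refine Complex.ext (hre x hx) ?_
    -- The real part at `i x` is minus the imaginary part at `x`.
    have := hre (Complex.I • x) fun i j => S.smul_mem _ (hx i j)
    rw [Matrix.transpose_smul, map_smul, map_smul, map_smul, ← smul_add, smul_eq_mul, smul_eq_mul,
      Complex.I_mul_re, Complex.I_mul_re] at this
    exact neg_injective this
  refine ⟨(mapOfFunctional F₁).domRestrict S,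
    (Matrix.transposeLinearEquiv (Fin n) (Fin n) ℂ ℂ).toLinearMap ∘ₗ
      (mapOfFunctional F₂).domRestrict S,
    isCPMap_mapOfFunctional hn S F₁ hF₁, isCPMap_mapOfFunctional hn S F₂ hF₂, ?_⟩
  ext a i j
  have h1 := hsum (Matrix.single i j (a : A)) fun p q => by
    rw [Matrix.single_apply]
    split_ifs
    exacts [a.2, S.zero_mem]
  have h2 : L (Matrix.single i j (a : A)) = φ a i j := by
    rw [hL, ← hext]
    rw [Finset.sum_eq_single i, Finset.sum_eq_single j]
    · simp
    · intro q _ hq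
      simp [hq.symm]
    · simp
    · intro p _ hp
      simp [hp.symm]
    · simp
  rw [h2, Matrix.transpose_single] at h1
  exact h1

/-- every positive map `ψ : S → Mₙ(ℂ)` is decomposable iff
`Jₙ(S)` is contained in the closure of the cone `S⁺ ⊗ Mₙ(ℂ)⁺` in `Mₙ(𝒜)`. -/
theorem every_posMap_decomposable_iff
    (S : Submodule ℂ A) (h_one : (1 : A) ∈ S) (h_star : ∀ a ∈ S, star a ∈ S)
    (n : ℕ) (hn : 0 < n) :
    (∀ ψ : S →ₗ[ℂ] Matrix (Fin n) (Fin n) ℂ, IsPosMap ψ → IsDecomposable ψ) ↔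
      (∀ s : Matrix (Fin n) (Fin n) S, memJ s → matCoe s ∈ closure (posCone S n)) := by
  refine ⟨fun h s hs => mem_closure_of_forall_decomposable S n h s hs, fun h ψ hψ => ?_⟩
  exact isDecomposable_of_dualFunc_nonneg h_one h_star hn hψ fun s hs =>
    dualFunc_nonneg_of_mem_closure h_one h_star hψ (h s hs)
end

section
/- If p, q are positive integers with pq ≤ 6, then J_p(M_q(ℂ)) is contained in the closure of the cone M_q(ℂ)⁺ ⊗ M_p(ℂ)⁺ in M_p(M_q(ℂ)). -/
/-!
If `p = 1` or `q = 1` the claim is immediate, so one factor has dimension `2` and the other dimension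
`n ≤ 3`. The theorem is then the result of Størmer and Woronowicz that positive matrices on
`ℂ² ⊗ ℂⁿ` with positive partial transpose (PPT matrices) are limits of sums of products. PPT
matrices of trace one form a compact convex set, so by Krein–Milman it suffices to show that an
extreme ray `ρ = [a, c; cᴴ, b]` of the PPT cone is spanned by a product `ξ ξᴴ`,
`ξ = (x₀, x₁) ⊗ y` (`ExtRay.isProd_of_card_le`). For that it is enough to find one nonzero product
below `ρ` in the order of the cone (`ExtRay.isProd`).

If `a v = 0` with `v ≠ 0`, then `c v = cᴴ v = 0`; either `b v ≠ 0` and a product `(0, 1) ⊗ b v` splits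
off (`ExtRay.degenerate`), or `v` lies in the kernel of all blocks and `n` can be lowered. If `a` is
invertible, a local conjugation gives `a = 1`, and the PPT property says that `E = b - cᴴ c` and
`D = b - c cᴴ` are positive semidefinite. Counting dimensions (`ExtRay.count`), extremality forces
`(n + rank E)² + (n + rank D)² ≤ 4 n² + 1`. As `E` and `D` have equal trace, `n ≤ 3` leaves two cases.

* `E = D = 0`. Then `c` is normal and `b = cᴴ c`; each eigenvector of `c` gives a product that splits
  off (`normal_ext`).
* `n = 3`, `E = e eᴴ`, `D = d dᴴ`. Then `c cᴴ - cᴴ c = e eᴴ - d dᴴ`, and unless this is zero, an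
  explicit computation in an eigenbasis of the commutator (`completion_three`) completes `c` to a normal
  matrix `N = [c, d; ω eᴴ, f]` of size four, with `ω` a phase. Now `ρ` is a compression of
  `[1, N; Nᴴ, Nᴴ N]`, and an eigenvector of `N` again gives a product below `ρ`.
-/

open Matrix

/-- The cone `M_q(ℂ)⁺ ⊗ M_p(ℂ)⁺` inside `M_p(M_q(ℂ))`: finite sums `∑ sₗ ⊗ xₗ` with
`sₗ ∈ M_q(ℂ)` and `xₗ ∈ M_p(ℂ)` positive semidefinite; `s ⊗ x` is the block matrix
`[x_{ij} s]`. -/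
def matPosCone (p q : ℕ) : Set (Matrix (Fin p) (Fin p) (Matrix (Fin q) (Fin q) ℂ)) :=
  { T | ∃ (k : ℕ) (s : Fin k → Matrix (Fin q) (Fin q) ℂ)
          (x : Fin k → Matrix (Fin p) (Fin p) ℂ),
      (∀ l, IsPosElem (s l)) ∧ (∀ l, IsPosElem (x l)) ∧
      T = ∑ l, Matrix.of fun i j => x l i j • s l }

open scoped ComplexOrder

section

variable {κ κ' : Type} [Fintype κ] [DecidableEq κ] [Fintype κ'] [DecidableEq κ']

set_option linter.unusedSectionVars false

/-! ### Partial transposes, PPT matrices and product matrices -/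

/-- Partial transpose on the `2 × 2` block index: with `ℂ² ⊗ ℂ^κ` indexed by `κ ⊕ κ`, the two
off-diagonal blocks are exchanged and each block is left as it is. -/
def pT {κ : Type} (ρ : Matrix (κ ⊕ κ) (κ ⊕ κ) ℂ) : Matrix (κ ⊕ κ) (κ ⊕ κ) ℂ :=
  fromBlocks ρ.toBlocks₁₁ ρ.toBlocks₂₁ ρ.toBlocks₁₂ ρ.toBlocks₂₂

@[simp] lemma pT_fromBlocks {κ : Type} (a b c d : Matrix κ κ ℂ) :
    pT (fromBlocks a b c d) = fromBlocks a c b d := rfl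

lemma pT_add {κ : Type} (ρ σ : Matrix (κ ⊕ κ) (κ ⊕ κ) ℂ) : pT (ρ + σ) = pT ρ + pT σ := by
  ext (i | i) (j | j) <;> rfl

lemma pT_sub {κ : Type} (ρ σ : Matrix (κ ⊕ κ) (κ ⊕ κ) ℂ) : pT (ρ - σ) = pT ρ - pT σ := by
  ext (i | i) (j | j) <;> rfl

lemma pT_smul {κ : Type} (t : ℂ) (ρ : Matrix (κ ⊕ κ) (κ ⊕ κ) ℂ) : pT (t • ρ) = t • pT ρ := by
  ext (i | i) (j | j) <;> rfl

lemma pT_rsmul {κ : Type} (t : ℝ) (ρ : Matrix (κ ⊕ κ) (κ ⊕ κ) ℂ) : pT (t • ρ) = t • pT ρ := by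
  ext (i | i) (j | j) <;> rfl

lemma pT_pT {κ : Type} (ρ : Matrix (κ ⊕ κ) (κ ⊕ κ) ℂ) : pT (pT ρ) = ρ := by
  ext (i | i) (j | j) <;> rfl

lemma pT_conjTranspose {κ : Type} (ρ : Matrix (κ ⊕ κ) (κ ⊕ κ) ℂ) : pT ρᴴ = (pT ρ)ᴴ := by
  ext (i | i) (j | j) <;> rfl

lemma trace_pT (ρ : Matrix (κ ⊕ κ) (κ ⊕ κ) ℂ) : (pT ρ).trace = ρ.trace := by
  simp [Matrix.trace, pT, toBlocks₁₁, toBlocks₂₂]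

/-- The operator `1 ⊗ A : ℂ² ⊗ ℂ^κ → ℂ² ⊗ ℂ^κ'`. -/
def dbl {κ κ' : Type} (A : Matrix κ' κ ℂ) : Matrix (κ' ⊕ κ') (κ ⊕ κ) ℂ := fromBlocks A 0 0 A

/-- Local conjugation `ρ ↦ (1 ⊗ A) ρ (1 ⊗ A)ᴴ`, i.e. each block `m` of `ρ` becomes `A m Aᴴ`. It commutes
with the partial transpose. -/
def locConj {κ κ' : Type} [Fintype κ] (A : Matrix κ' κ ℂ) (ρ : Matrix (κ ⊕ κ) (κ ⊕ κ) ℂ) :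
    Matrix (κ' ⊕ κ') (κ' ⊕ κ') ℂ := dbl A * ρ * (dbl A)ᴴ

lemma locConj_fromBlocks {κ' : Type} (A : Matrix κ' κ ℂ) (a b c d : Matrix κ κ ℂ) :
    locConj A (fromBlocks a b c d) =
      fromBlocks (A * a * Aᴴ) (A * b * Aᴴ) (A * c * Aᴴ) (A * d * Aᴴ) := by
  simp [locConj, dbl, fromBlocks_conjTranspose, fromBlocks_multiply]

lemma pT_locConj {κ' : Type} (A : Matrix κ' κ ℂ) (ρ : Matrix (κ ⊕ κ) (κ ⊕ κ) ℂ) :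
    pT (locConj A ρ) = locConj A (pT ρ) := by
  rw [← fromBlocks_toBlocks ρ]
  simp only [locConj_fromBlocks, pT_fromBlocks]

lemma locConj_locConj {κ'' : Type} (A : Matrix κ'' κ' ℂ) (B : Matrix κ' κ ℂ)
    (ρ : Matrix (κ ⊕ κ) (κ ⊕ κ) ℂ) : locConj A (locConj B ρ) = locConj (A * B) ρ := by
  rw [← fromBlocks_toBlocks ρ]
  simp only [locConj_fromBlocks, conjTranspose_mul, Matrix.mul_assoc]

lemma locConj_one (ρ : Matrix (κ ⊕ κ) (κ ⊕ κ) ℂ) : locConj 1 ρ = ρ := by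
  simp [locConj, dbl]

lemma locConj_sub {κ' : Type} (A : Matrix κ' κ ℂ) (ρ σ : Matrix (κ ⊕ κ) (κ ⊕ κ) ℂ) :
    locConj A (ρ - σ) = locConj A ρ - locConj A σ := by
  simp [locConj, Matrix.mul_sub, Matrix.sub_mul]

lemma locConj_rsmul {κ' : Type} (A : Matrix κ' κ ℂ) (t : ℝ) (ρ : Matrix (κ ⊕ κ) (κ ⊕ κ) ℂ) :
    locConj A (t • ρ) = t • locConj A ρ := by
  simp [locConj]

/-- The PPT cone of `ℂ² ⊗ ℂ^κ`: positive semidefinite matrices with positive semidefinite partial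
transpose. -/
def PPT {κ : Type} (ρ : Matrix (κ ⊕ κ) (κ ⊕ κ) ℂ) : Prop := ρ.PosSemidef ∧ (pT ρ).PosSemidef

lemma PPT.lc {ρ : Matrix (κ ⊕ κ) (κ ⊕ κ) ℂ} (h : PPT ρ) (A : Matrix κ' κ ℂ) :
    PPT (locConj A ρ) := by
  refine ⟨h.1.mul_mul_conjTranspose_same _, ?_⟩
  rw [pT_locConj]
  exact h.2.mul_mul_conjTranspose_same _

lemma PPT.add {ρ σ : Matrix (κ ⊕ κ) (κ ⊕ κ) ℂ} (h : PPT ρ) (h' : PPT σ) : PPT (ρ + σ) :=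
  ⟨h.1.add h'.1, by rw [pT_add]; exact h.2.add h'.2⟩

lemma PPT.rsmul {ρ : Matrix (κ ⊕ κ) (κ ⊕ κ) ℂ} (h : PPT ρ) {t : ℝ} (ht : 0 ≤ t) :
    PPT (t • ρ) :=
  ⟨h.1.smul ht, by rw [pT_rsmul]; exact h.2.smul ht⟩

lemma PPT.blocks {ρ : Matrix (κ ⊕ κ) (κ ⊕ κ) ℂ} (h : PPT ρ) :
    ∃ a b c : Matrix κ κ ℂ, ρ = fromBlocks a c cᴴ b ∧ aᴴ = a ∧ bᴴ = b := by
  have h1 := h.1.1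
  rw [IsHermitian] at h1
  rw [← fromBlocks_toBlocks ρ, fromBlocks_conjTranspose, fromBlocks_inj] at h1
  refine ⟨ρ.toBlocks₁₁, ρ.toBlocks₂₂, ρ.toBlocks₁₂, ?_, h1.1, h1.2.2.2⟩
  rw [h1.2.2.1, fromBlocks_toBlocks]

/-- `ρ` generates an extreme ray of the PPT cone: every PPT matrix below `ρ` in the order of that cone
is a real multiple of `ρ`. The zero matrix is allowed. -/
def ExtRay {κ : Type} (ρ : Matrix (κ ⊕ κ) (κ ⊕ κ) ℂ) : Prop :=
  PPT ρ ∧ ∀ σ, PPT σ → PPT (ρ - σ) → ∃ t : ℝ, σ = t • ρ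

/-- Extremality passes to a local conjugate from which `ρ` can be recovered by the local conjugation
with a right inverse. -/
lemma ExtRay.lc {ρ : Matrix (κ ⊕ κ) (κ ⊕ κ) ℂ} (h : ExtRay ρ)
    (V : Matrix κ κ' ℂ) (W : Matrix κ' κ ℂ) (hWV : W * V = 1) (hρ : locConj V (locConj W ρ) = ρ) :
    ExtRay (locConj W ρ) := by
  refine ⟨h.1.lc W, fun σ hσ hσ' => ?_⟩
  obtain ⟨t, ht⟩ := h.2 (locConj V σ) (hσ.lc V) (by
    have := hσ'.lc V
    rwa [locConj_sub, hρ] at this)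
  refine ⟨t, ?_⟩
  rw [← locConj_rsmul, ← ht, locConj_locConj, hWV, locConj_one]

/-- The product vector `(x₀, x₁) ⊗ y`. -/
def pv {κ : Type} (x₀ x₁ : ℂ) (y : κ → ℂ) : κ ⊕ κ → ℂ := Sum.elim (x₀ • y) (x₁ • y)

/-- `ρ` is the rank-one (or zero) matrix `ξ ξᴴ` of a product vector `ξ`. -/
def IsProd {κ : Type} (ρ : Matrix (κ ⊕ κ) (κ ⊕ κ) ℂ) : Prop :=
  ∃ x₀ x₁ y, ρ = vecMulVec (pv x₀ x₁ y) (star (pv x₀ x₁ y))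

lemma isProd_iff {κ : Type} {ρ : Matrix (κ ⊕ κ) (κ ⊕ κ) ℂ} : IsProd ρ ↔
    ∃ (x₀ x₁ : ℂ) (y : κ → ℂ), ρ = fromBlocks
      ((x₀ * star x₀) • vecMulVec y (star y)) ((x₀ * star x₁) • vecMulVec y (star y))
      ((x₁ * star x₀) • vecMulVec y (star y)) ((x₁ * star x₁) • vecMulVec y (star y)) := by
  refine exists₃_congr fun x₀ x₁ y => ?_
  suffices h : vecMulVec (pv x₀ x₁ y) (star (pv x₀ x₁ y)) = fromBlocks
      ((x₀ * star x₀) • vecMulVec y (star y)) ((x₀ * star x₁) • vecMulVec y (star y))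
      ((x₁ * star x₀) • vecMulVec y (star y)) ((x₁ * star x₁) • vecMulVec y (star y)) by
    rw [h]
  ext (i | i) (j | j) <;> simp [pv, vecMulVec_apply] <;> ring

lemma IsProd.lc {ρ : Matrix (κ ⊕ κ) (κ ⊕ κ) ℂ} (h : IsProd ρ) {κ' : Type} (A : Matrix κ' κ ℂ) :
    IsProd (locConj A ρ) := by
  rw [isProd_iff] at h ⊢
  obtain ⟨x₀, x₁, y, rfl⟩ := h
  refine ⟨x₀, x₁, A *ᵥ y, ?_⟩
  simp [locConj_fromBlocks, mul_vecMulVec, vecMulVec_mul, star_mulVec]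

lemma IsProd.rsmul {κ : Type} {ρ : Matrix (κ ⊕ κ) (κ ⊕ κ) ℂ} (h : IsProd ρ) {t : ℝ} (ht : 0 ≤ t) :
    IsProd (t • ρ) := by
  rw [isProd_iff] at h ⊢
  obtain ⟨x₀, x₁, y, rfl⟩ := h
  refine ⟨(√t : ℂ) * x₀, (√t : ℂ) * x₁, y, ?_⟩
  have h2 : (√t : ℂ) * √t = t := by exact_mod_cast Real.mul_self_sqrt ht
  rw [fromBlocks_smul]
  congr 1 <;>
  · ext i j
    simp only [Matrix.smul_apply, smul_eq_mul, Complex.real_smul, star_mul', Complex.star_def,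
      Complex.conj_ofReal, ← h2]
    ring

/-- An extreme `ρ` dominating a nonzero product matrix in the PPT order is itself a product. Every
verification that an extreme ray is a product ends here. -/
lemma ExtRay.isProd {ρ σ : Matrix (κ ⊕ κ) (κ ⊕ κ) ℂ} (h : ExtRay ρ) (hσ : IsProd σ) (h0 : σ ≠ 0)
    (hP : PPT σ) (h1 : PPT (ρ - σ)) : IsProd ρ := by
  obtain ⟨t, rfl⟩ := h.2 σ hP h1
  have ht : t ≠ 0 := by rintro rfl; simp at h0
  have : ρ = t⁻¹ • t • ρ := by rw [smul_smul, inv_mul_cancel₀ ht, one_smul]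
  rcases lt_or_gt_of_ne ht with ht' | ht'
  · exfalso
    apply h0
    have h3 : (t • ρ).trace ≤ 0 := by
      rw [trace_smul]
      exact smul_nonpos_of_nonpos_of_nonneg ht'.le h.1.1.trace_nonneg
    exact hP.1.trace_eq_zero_iff.1 (le_antisymm h3 hP.1.trace_nonneg)
  · rw [this]
    exact hσ.rsmul (inv_nonneg.2 ht'.le)

lemma IsProd.ppt {ρ : Matrix (κ ⊕ κ) (κ ⊕ κ) ℂ} (h : IsProd ρ) : PPT ρ := by
  refine ⟨?_, ?_⟩
  · obtain ⟨x₀, x₁, y, rfl⟩ := h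
    exact posSemidef_vecMulVec_self_star _
  · obtain ⟨x₀, x₁, y, rfl⟩ := isProd_iff.1 h
    have : IsProd (pT (fromBlocks
      ((x₀ * star x₀) • vecMulVec y (star y)) ((x₀ * star x₁) • vecMulVec y (star y))
      ((x₁ * star x₀) • vecMulVec y (star y)) ((x₁ * star x₁) • vecMulVec y (star y)))) := by
      rw [isProd_iff]
      refine ⟨star x₀, star x₁, y, ?_⟩
      rw [pT_fromBlocks]
      simp [mul_comm]
    obtain ⟨x₀, x₁, y, h⟩ := this
    rw [h]
    exact posSemidef_vecMulVec_self_star _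

/-! ### Perturbation of extreme rays and the dimension count -/

lemma exists_unitary_diag {X : Matrix κ κ ℂ} (hX : X.IsHermitian) :
    ∃ (U : Matrix κ κ ℂ), U * Uᴴ = 1 ∧ Uᴴ * U = 1 ∧
      X = U * diagonal (fun i => (hX.eigenvalues i : ℂ)) * Uᴴ := by
  refine ⟨hX.eigenvectorUnitary, ?_, ?_, ?_⟩
  · exact Unitary.coe_mul_star_self _
  · exact Unitary.coe_star_mul_self _
  · conv_lhs => rw [hX.spectral_theorem, Unitary.conjStarAlgAut_apply]
    rfl

/-- The identity is interior to the positive cone: `1 + t X ≥ 0` for `|t| ≤ ε`, where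
`ε = 1 / (1 + ∑ |λᵢ|)` in terms of the eigenvalues of `X`. -/
lemma exists_posSemidef_one_add {X : Matrix κ κ ℂ} (hX : X.IsHermitian) :
    ∃ ε : ℝ, 0 < ε ∧ ∀ t : ℝ, |t| ≤ ε → (1 + t • X).PosSemidef := by
  obtain ⟨U, h1, h2, h3⟩ := exists_unitary_diag hX
  set l := hX.eigenvalues
  have hS : 0 ≤ ∑ i, |l i| := Finset.sum_nonneg fun i _ => abs_nonneg _
  refine ⟨(1 + ∑ i, |l i|)⁻¹, by positivity, fun t ht => ?_⟩
  have h4 : 1 + t • X = U * diagonal (fun i => ((1 + t * l i : ℝ) : ℂ)) * Uᴴ := by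
    have : diagonal (fun i => ((1 + t * l i : ℝ) : ℂ))
        = 1 + t • diagonal (fun i => (l i : ℂ)) := by
      ext i j
      by_cases h : i = j
      · subst h; simp
      · simp [h]
    rw [this, Matrix.mul_add, Matrix.add_mul, Matrix.mul_one, h1]
    conv_lhs => rw [h3]
    simp
  rw [h4]
  refine PosSemidef.mul_mul_conjTranspose_same (PosSemidef.diagonal fun i => ?_) _
  have h5 : |l i| ≤ ∑ i, |l i| := Finset.single_le_sum (fun i _ => abs_nonneg (l i)) (Finset.mem_univ i)
  have h6 : |t * l i| ≤ 1 := by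
    rw [abs_mul]
    calc |t| * |l i| ≤ (1 + ∑ i, |l i|)⁻¹ * (1 + ∑ i, |l i|) := by gcongr; linarith
      _ = 1 := inv_mul_cancel₀ (by positivity)
  have := (abs_le.1 h6).1
  simp only [Pi.zero_apply]
  exact_mod_cast (by linarith : (0:ℝ) ≤ 1 + t * l i)

/-- Full rank factorisation of a positive semidefinite matrix; the left inverse `L` witnesses that `F`
has full column rank, so that `k` is the rank of `E`. -/
lemma exists_factor {E : Matrix κ κ ℂ} (hE : E.PosSemidef) :
    ∃ (k : ℕ) (F : Matrix κ (Fin k) ℂ) (L : Matrix (Fin k) κ ℂ), E = F * Fᴴ ∧ L * F = 1 := by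
  obtain ⟨U, h1, h2, h3⟩ := exists_unitary_diag hE.1
  have hl := hE.eigenvalues_nonneg
  set l := hE.1.eigenvalues
  let m := {i // l i ≠ 0}
  let e := (Fintype.equivFin m).symm
  have hinj : Function.Injective (fun a => (e a : κ)) :=
    Subtype.val_injective.comp e.injective
  have hs : ∀ i, (√(l i) : ℂ) * √(l i) = l i := fun i => by
    exact_mod_cast Real.mul_self_sqrt (hl i)
  refine ⟨Fintype.card m, Matrix.of fun i a => U i (e a) * (√(l (e a)) : ℂ),
    Matrix.of fun a i => (√(l (e a)) : ℂ)⁻¹ * star (U i (e a)), ?_, ?_⟩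
  · conv_lhs => rw [h3]
    ext i j
    rw [Matrix.mul_apply, Matrix.mul_apply]
    simp only [mul_diagonal, conjTranspose_apply, of_apply, star_mul', Complex.star_def,
      Complex.conj_ofReal]
    rw [e.sum_comp (fun a : m => U i a * (√(l a) : ℂ) * ((starRingEnd ℂ) (U j a) * (√(l a) : ℂ)))]
    rw [← Finset.sum_subtype (Finset.univ.filter fun i => l i ≠ 0) (by simp)
      (fun a => U i a * (√(l a) : ℂ) * ((starRingEnd ℂ) (U j a) * (√(l a) : ℂ)))]
    rw [Finset.sum_filter_of_ne]
    · refine Finset.sum_congr rfl fun a _ => ?_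
      rw [← hs]; ring
    · intro a _ ha hla
      simp [hla] at ha
  · ext a b
    have h4 := congrFun (congrFun h2 (e a)) (e b)
    rw [Matrix.mul_apply] at h4 ⊢
    simp only [conjTranspose_apply] at h4
    have h5 : (√(l (e b)) : ℂ) ≠ 0 := by
      have := lt_of_le_of_ne (hl (e b)) (e b).2.symm
      exact_mod_cast (Real.sqrt_pos.2 this).ne'
    calc _ = (√(l (e a)) : ℂ)⁻¹ * (∑ j, star (U j (e a)) * U j (e b)) * √(l (e b)) := by
          rw [Finset.mul_sum, Finset.sum_mul]
          refine Finset.sum_congr rfl fun j _ => ?_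
          simp only [of_apply]
          ring
      _ = _ := by
        rw [h4, one_apply, one_apply]
        by_cases hab : a = b
        · subst hab
          simp [h5]
        · have : (e a : κ) ≠ e b := fun h => hab (hinj h)
          simp [this, hab]

/-- At an extreme `ρ` there is no traceless direction along which one can move both ways inside the
PPT cone. -/
lemma ExtRay.dir {ρ H : Matrix (κ ⊕ κ) (κ ⊕ κ) ℂ} (h : ExtRay ρ) (h0 : ρ.trace ≠ 0)
    (hH : H.trace = 0) {ε : ℝ} (hε : 0 < ε) (h1 : PPT (ρ + ε • H)) (h2 : PPT (ρ - ε • H)) :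
    H = 0 := by
  obtain ⟨t, ht⟩ := h.2 ((1/2 : ℝ) • (ρ + ε • H)) (h1.rsmul (by norm_num)) (by
    have : ρ - (1/2 : ℝ) • (ρ + ε • H) = (1/2 : ℝ) • (ρ - ε • H) := by module
    rw [this]
    exact h2.rsmul (by norm_num))
  have h3 : ε • H = (2 * t - 1) • ρ := by
    have : ε • H = (2:ℝ) • ((1/2 : ℝ) • (ρ + ε • H)) - ρ := by module
    rw [this, ht]; module
  have h4 : (2 * t - 1) = 0 := by
    have := congrArg trace h3
    rw [trace_smul, trace_smul, hH, smul_zero] at this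
    exact (smul_eq_zero.1 this.symm).resolve_right h0
  rw [h4, zero_smul] at h3
  exact (smul_eq_zero.1 h3).resolve_left (ne_of_gt hε)

/-- Dimension count: if `ρ` is extreme, `r = rank ρ` and `r' = rank (pT ρ)`, then
`r² + r'² ≤ 4 n² + 1` with `n = card κ`. Perturbations `V X Vᴴ` of `ρ` inside its own face with
`pT (V X Vᴴ) = V' Y V'ᴴ` inside the face of `pT ρ` and with trace zero form the kernel of a linear
map from a space of dimension `r² + r'²` to one of dimension `4 n² + 1`, and extremality forces this
kernel to vanish. -/
lemma ExtRay.count {ρ : Matrix (κ ⊕ κ) (κ ⊕ κ) ℂ} (h : ExtRay ρ) (h0 : ρ.trace ≠ 0)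
    {m m' : Type} [Fintype m] [DecidableEq m] [Fintype m'] [DecidableEq m']
    (V : Matrix (κ ⊕ κ) m ℂ) (L : Matrix m (κ ⊕ κ) ℂ) (V' : Matrix (κ ⊕ κ) m' ℂ)
    (L' : Matrix m' (κ ⊕ κ) ℂ) (hV : ρ = V * Vᴴ) (hL : L * V = 1) (hV' : pT ρ = V' * V'ᴴ)
    (hL' : L' * V' = 1) :
    Fintype.card m ^ 2 + Fintype.card m' ^ 2 ≤ 4 * Fintype.card κ ^ 2 + 1 := by
  by_contra hlt
  push Not at hlt
  -- A Hermitian solution `(X, Y)` gives a two-sided perturbation of `ρ` inside the PPT cone.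
  have key : ∀ (X : Matrix m m ℂ) (Y : Matrix m' m' ℂ), Xᴴ = X → Yᴴ = Y →
      pT (V * X * Vᴴ) = V' * Y * V'ᴴ → (V * X * Vᴴ).trace = 0 → X = 0 ∧ Y = 0 := by
    intro X Y hX hY hXY htr
    obtain ⟨ε, hε, h1⟩ := exists_posSemidef_one_add hX
    obtain ⟨ε', hε', h2⟩ := exists_posSemidef_one_add hY
    have h3 : ∀ t : ℝ, |t| ≤ min ε ε' → PPT (ρ + t • (V * X * Vᴴ)) := by
      intro t ht
      constructor
      · have : ρ + t • (V * X * Vᴴ) = V * (1 + t • X) * Vᴴ := by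
          rw [hV, Matrix.mul_add, Matrix.add_mul]; simp
        rw [this]
        exact (h1 t (ht.trans (min_le_left _ _))).mul_mul_conjTranspose_same _
      · have : pT (ρ + t • (V * X * Vᴴ)) = V' * (1 + t • Y) * V'ᴴ := by
          rw [pT_add, pT_rsmul, hXY, hV', Matrix.mul_add, Matrix.add_mul]; simp
        rw [this]
        exact (h2 t (ht.trans (min_le_right _ _))).mul_mul_conjTranspose_same _
    have hm : 0 < min ε ε' := lt_min hε hε'
    have hH : V * X * Vᴴ = 0 := by
      refine h.dir h0 htr hm (h3 _ (abs_of_pos hm).le) ?_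
      have := h3 (-min ε ε') (by rw [abs_neg, abs_of_pos hm])
      rwa [neg_smul, ← sub_eq_add_neg] at this
    have hX0 : X = L * (V * X * Vᴴ) * Lᴴ := by
      calc X = (L * V) * X * (L * V)ᴴ := by simp [hL]
        _ = _ := by simp only [conjTranspose_mul, Matrix.mul_assoc]
    have hY0 : Y = L' * (V' * Y * V'ᴴ) * L'ᴴ := by
      calc Y = (L' * V') * Y * (L' * V')ᴴ := by simp [hL']
        _ = _ := by simp only [conjTranspose_mul, Matrix.mul_assoc]
    constructor
    · rw [hX0, hH]; simp
    · rw [hY0, ← hXY, hH]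
      have : pT (0 : Matrix (κ ⊕ κ) (κ ⊕ κ) ℂ) = 0 := by ext (i | i) (j | j) <;> rfl
      simp [this]
  let Φ : (Matrix m m ℂ × Matrix m' m' ℂ) →ₗ[ℂ] (Matrix (κ ⊕ κ) (κ ⊕ κ) ℂ × ℂ) :=
    { toFun := fun p => (pT (V * p.1 * Vᴴ) - V' * p.2 * V'ᴴ, (V * p.1 * Vᴴ).trace)
      map_add' := fun p q => by
        ext1
        · simp only [Prod.fst_add, Prod.snd_add, Matrix.mul_add, Matrix.add_mul, pT_add]
          abel
        · simp [Matrix.mul_add, Matrix.add_mul]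
      map_smul' := fun t p => by
        ext1
        · simp [pT_smul, smul_sub]
        · simp }
  have hker : LinearMap.ker Φ ≠ ⊥ := by
    apply LinearMap.ker_ne_bot_of_finrank_lt
    simp only [Module.finrank_prod, Module.finrank_matrix, Module.finrank_self, Fintype.card_sum]
    nlinarith
  obtain ⟨⟨X, Y⟩, hXY, hne⟩ := Submodule.exists_mem_ne_zero_of_ne_bot hker
  have hXY' : pT (V * X * Vᴴ) - V' * Y * V'ᴴ = 0 ∧ (V * X * Vᴴ).trace = 0 :=
    Prod.ext_iff.1 (LinearMap.mem_ker.1 hXY)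
  obtain ⟨e1, e2⟩ := hXY'
  rw [sub_eq_zero] at e1
  have e1' : pT (V * Xᴴ * Vᴴ) = V' * Yᴴ * V'ᴴ := by
    have := congrArg conjTranspose e1
    rw [← pT_conjTranspose] at this
    simpa [conjTranspose_mul, Matrix.mul_assoc] using this
  have e2' : (V * Xᴴ * Vᴴ).trace = 0 := by
    have : (V * Xᴴ * Vᴴ) = (V * X * Vᴴ)ᴴ := by simp [conjTranspose_mul, Matrix.mul_assoc]
    rw [this, trace_conjTranspose, e2, star_zero]
  -- The solution space is stable under `ᴴ`, so a complex solution splits into two Hermitian ones.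
  have k1 := key (X + Xᴴ) (Y + Yᴴ) (by simp [add_comm]) (by simp [add_comm])
    (by simp only [Matrix.mul_add, Matrix.add_mul, pT_add, e1, e1'])
    (by simp [Matrix.mul_add, Matrix.add_mul, e2, e2'])
  have k2 := key (Complex.I • (X - Xᴴ)) (Complex.I • (Y - Yᴴ))
    (by simp [conjTranspose_smul, ← smul_neg]) (by simp [conjTranspose_smul, ← smul_neg])
    (by simp only [Matrix.mul_smul, Matrix.smul_mul, pT_smul, Matrix.mul_sub, Matrix.sub_mul, pT_sub, e1, e1'])
    (by simp [Matrix.mul_sub, Matrix.sub_mul, e2, e2'])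
  have aux : ∀ {n : Type} (Z : Matrix n n ℂ), Z + Zᴴ = 0 → Complex.I • (Z - Zᴴ) = 0 → Z = 0 := by
    intro n Z h1 h2
    have h3 := (smul_eq_zero.1 h2).resolve_left Complex.I_ne_zero
    have : Z = (1/2 : ℂ) • ((Z + Zᴴ) + (Z - Zᴴ)) := by module
    rw [this, h1, h3]; simp
  exact hne (Prod.ext (aux X k1.1 k2.1) (aux Y k1.2 k2.2))

/-! ### Compressions of normal matrices, and splitting off products -/

lemma exists_scale {s : ℂ} (hs : 0 < s) : ∃ r : ℂ, star r * r * s = 1 := by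
  have h1 : 0 < s.re := (Complex.pos_iff.1 hs).1
  have h2 : s = (s.re : ℂ) := by
    apply Complex.ext <;> simp [(Complex.pos_iff.1 hs).2.symm]
  refine ⟨((√s.re)⁻¹ : ℝ), ?_⟩
  have h3 := Real.mul_self_sqrt h1.le
  have h4 := (Real.sqrt_pos.2 h1).ne'
  have h5 : (√s.re)⁻¹ * (√s.re)⁻¹ * s.re = 1 := by
    nth_rewrite 3 [← h3]
    field_simp
  rw [Complex.star_def, Complex.conj_ofReal, h2, Complex.ofReal_re]
  exact_mod_cast h5

lemma exists_normalize {y : κ → ℂ} (hy : y ≠ 0) :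
    ∃ r : ℂ, star (r • y) ⬝ᵥ (r • y) = 1 := by
  obtain ⟨r, hr⟩ := exists_scale (dotProduct_star_self_pos_iff.2 hy)
  refine ⟨r, ?_⟩
  rw [← hr]
  simp [dotProduct_comm]
  ring

/-- The matrix `[1, N; Nᴴ, Nᴴ N] = [1, N]ᴴ [1, N]`. It is always positive semidefinite, and it is PPT if
`N` is normal. -/
def rhoN {m : Type} [Fintype m] [DecidableEq m] (N : Matrix m m ℂ) :
    Matrix (m ⊕ m) (m ⊕ m) ℂ := fromBlocks 1 N Nᴴ (Nᴴ * N)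

lemma rhoN_posSemidef (N : Matrix κ κ ℂ) : (rhoN N).PosSemidef := by
  have : rhoN N = (fromBlocks 1 N 0 0)ᴴ * fromBlocks 1 N 0 0 := by
    simp [rhoN, fromBlocks_conjTranspose, fromBlocks_multiply]
  rw [this]
  exact posSemidef_conjTranspose_mul_self _

lemma rhoN_ppt (N : Matrix κ κ ℂ) (hN : Nᴴ * N = N * Nᴴ) : PPT (rhoN N) := by
  refine ⟨rhoN_posSemidef N, ?_⟩
  have := rhoN_posSemidef Nᴴ
  rw [rhoN, conjTranspose_conjTranspose, ← hN] at this
  exact this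

/-- For a normal matrix, an eigenvector is also an eigenvector of the adjoint. -/
lemma normal_eigen {N : Matrix κ κ ℂ} (hN : Nᴴ * N = N * Nᴴ) {z : ℂ} {y : κ → ℂ}
    (hy : N *ᵥ y = z • y) : Nᴴ *ᵥ y = star z • y := by
  have h1 : (N - z • 1) *ᵥ y = 0 := by simp [sub_mulVec, smul_mulVec, hy]
  have h2 : (N - z • 1)ᴴ * (N - z • 1) = (N - z • 1) * (N - z • 1)ᴴ := by
    simp only [conjTranspose_sub, conjTranspose_smul, conjTranspose_one, Matrix.sub_mul,
      Matrix.mul_sub, hN, Matrix.smul_mul, Matrix.mul_smul, Matrix.one_mul, Matrix.mul_one]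
    simp only [smul_sub, smul_smul, mul_comm]
    abel
  have h3 : ((N - z • 1) * (N - z • 1)ᴴ) *ᵥ y = 0 := by
    rw [← h2, ← mulVec_mulVec, h1, mulVec_zero]
  have h4 : (N - z • 1)ᴴ *ᵥ y = 0 := by
    have := (self_mul_conjTranspose_mulVec_eq_zero (N - z • 1) y).1 h3
    exact this
  simpa [sub_mulVec, smul_mulVec, sub_eq_zero] using h4

lemma exists_eigen [Nonempty κ] (N : Matrix κ κ ℂ) :
    ∃ (z : ℂ) (y : κ → ℂ), y ≠ 0 ∧ N *ᵥ y = z • y := by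
  obtain ⟨z, hz⟩ := Module.End.exists_eigenvalue (Matrix.toLin' N)
  obtain ⟨y, hy⟩ := hz.exists_hasEigenvector
  exact ⟨z, y, hy.2, by simpa using hy.apply_eq_smul⟩

/-- If an extreme `ρ` is a local compression of `rhoN N` with `N` normal, then `ρ` is a product. With
`Y` the projection onto a unit eigenvector `y` of `N`, the difference between `rhoN N` and the product
matrix of `(1, star z) ⊗ y` is `locConj (1 - Y) (rhoN N)`, hence PPT; compressing by `V` keeps this, and
the compressed product is nonzero since `V y ≠ 0`. -/
lemma normal_ext {N : Matrix κ' κ' ℂ} (hN : Nᴴ * N = N * Nᴴ) (V : Matrix κ κ' ℂ)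
    (hρ : ExtRay (locConj V (rhoN N))) {z : ℂ} {y : κ' → ℂ} (hy : N *ᵥ y = z • y)
    (hVy : V *ᵥ y ≠ 0) : IsProd (locConj V (rhoN N)) := by
  wlog hy1 : star y ⬝ᵥ y = 1 generalizing y with H
  · have : y ≠ 0 := by rintro rfl; simp at hVy
    obtain ⟨r, hr⟩ := exists_normalize this
    refine H (y := r • y) ?_ ?_ hr
    · rw [mulVec_smul, hy, smul_comm]
    · rw [mulVec_smul]
      refine smul_ne_zero ?_ hVy
      rintro rfl
      simp at hr
  have hy2 := normal_eigen hN hy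
  set Y := vecMulVec y (star y) with hY
  have hYH : Yᴴ = Y := by simp [hY, conjTranspose_vecMulVec]
  have e1 : N * Y = z • Y := by rw [hY, mul_vecMulVec, hy, smul_vecMulVec]
  have e2 : Nᴴ * Y = star z • Y := by rw [hY, mul_vecMulVec, hy2, smul_vecMulVec]
  have e3 : Y * N = z • Y := by
    have := congrArg conjTranspose e2
    simpa [conjTranspose_mul, hYH] using this
  have e4 : Y * Nᴴ = star z • Y := by
    have := congrArg conjTranspose e1
    simpa [conjTranspose_mul, hYH] using this
  have e5 : Y * Y = Y := by
    rw [hY, vecMulVec_mul_vecMulVec, hy1, one_smul]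
  have hprod : IsProd (fromBlocks Y (z • Y) (star z • Y) ((star z * z) • Y)) := by
    rw [isProd_iff]
    exact ⟨1, star z, y, by simp [hY]⟩
  have hdiff : rhoN N - fromBlocks Y (z • Y) (star z • Y) ((star z * z) • Y)
      = locConj (1 - Y) (rhoN N) := by
    rw [rhoN, locConj_fromBlocks, sub_eq_add_neg, fromBlocks_neg, fromBlocks_add]
    have e6 : Nᴴ * N * Y = (star z * z) • Y := by
      rw [Matrix.mul_assoc, e1, Matrix.mul_smul, e2, smul_smul, mul_comm]
    have e7 : Y * (Nᴴ * N) = (star z * z) • Y := by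
      rw [← Matrix.mul_assoc, e4, Matrix.smul_mul, e3, smul_smul]
    have gen : ∀ (M : Matrix κ' κ' ℂ) (t : ℂ), M * Y = t • Y → Y * M = t • Y →
        M + -(t • Y) = (1 - Y) * M * (1 - Y)ᴴ := by
      intro M t h1 h2
      simp only [conjTranspose_sub, conjTranspose_one, hYH, Matrix.sub_mul, Matrix.one_mul, h2,
        Matrix.mul_sub, h1, Matrix.smul_mul, e5, Matrix.mul_one]
      abel
    rw [← gen N z e1 e3, ← gen _ _ e2 e4, ← gen _ _ e6 e7, ← gen 1 1 (by simp) (by simp), one_smul]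
  refine hρ.isProd (hprod.lc V) ?_ (hprod.lc V).ppt ?_
  · rw [locConj_fromBlocks]
    intro h0
    rw [← fromBlocks_zero, fromBlocks_inj] at h0
    have h1 := h0.1
    rw [hY, mul_vecMulVec, vecMulVec_mul, ← star_mulVec, vecMulVec_eq_zero] at h1
    simp [hVy] at h1
  · rw [← locConj_sub, hdiff]
    exact ((rhoN_ppt N hN).lc _).lc V

/-- In a PPT matrix the kernel of the corner `a` lies in the kernels of `c` and of `cᴴ`: the former
comes from positivity of the partial transpose, the latter from that of the matrix itself. -/
lemma PPT.ker {a b c : Matrix κ κ ℂ} (h : PPT (fromBlocks a c cᴴ b)) {v : κ → ℂ}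
    (hv : a *ᵥ v = 0) : cᴴ *ᵥ v = 0 ∧ c *ᵥ v = 0 := by
  have aux : ∀ d : Matrix κ κ ℂ, (fromBlocks a d dᴴ b).PosSemidef → dᴴ *ᵥ v = 0 := by
    intro d hd
    have h1 := (hd.dotProduct_mulVec_zero_iff (Sum.elim v 0)).1 (by
      rw [fromBlocks_mulVec]
      simp [hv, dotProduct, Fintype.sum_sum_type])
    rw [fromBlocks_mulVec] at h1
    ext i
    have := congrFun h1 (Sum.inr i)
    simpa using this
  refine ⟨aux c h.1, ?_⟩
  have h2 := h.2
  rw [pT_fromBlocks] at h2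
  simpa using aux cᴴ (by simpa using h2)

/-- If `c v = 0` and `⟨v, b v⟩ = 1`, the rank-one piece `(b v)(b v)ᴴ` can be split off from the corner
`b` without losing positivity, since the result is a congruence transform of the original matrix. -/
lemma sub_rank_one {a b c : Matrix κ κ ℂ} (hb : bᴴ = b)
    (h : (fromBlocks a c cᴴ b).PosSemidef) {v : κ → ℂ}
    (hc : c *ᵥ v = 0) (h1 : star v ⬝ᵥ (b *ᵥ v) = 1) :
    (fromBlocks a c cᴴ b - fromBlocks 0 0 0 (vecMulVec (b *ᵥ v) (star (b *ᵥ v)))).PosSemidef := by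
  set w := b *ᵥ v with hw
  have hcv : star v ᵥ* cᴴ = 0 := by rw [← star_mulVec, hc, star_zero]
  have hbv : star v ᵥ* b = star w := by rw [hw, star_mulVec, hb]
  have h2 : star w ⬝ᵥ v = 1 := by
    have := congrArg star h1
    rw [star_dotProduct] at this
    simpa [dotProduct_comm] using this
  have key : fromBlocks a c cᴴ b - fromBlocks 0 0 0 (vecMulVec w (star w)) =
      (fromBlocks 1 0 0 (1 - vecMulVec v (star w)))ᴴ * fromBlocks a c cᴴ b *
        fromBlocks 1 0 0 (1 - vecMulVec v (star w)) := by
    rw [fromBlocks_conjTranspose, fromBlocks_multiply, fromBlocks_multiply, sub_eq_add_neg,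
      fromBlocks_neg, fromBlocks_add]
    simp only [conjTranspose_one, conjTranspose_zero, conjTranspose_sub, conjTranspose_vecMulVec,
      star_star, Matrix.one_mul, Matrix.mul_one, Matrix.zero_mul, Matrix.mul_zero, add_zero,
      zero_add, Matrix.mul_sub, Matrix.sub_mul, mul_vecMulVec, vecMulVec_mul, hc, hcv, hbv,
      neg_zero]
    simp [← sub_eq_add_neg, sub_mulVec, ← hw, vecMulVec_mulVec, h2]
  rw [key]
  exact h.conjTranspose_mul_mul_same _

/-- The case of singular `a` in which some `v` in its kernel has `b v ≠ 0`: the product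
`(0, 1) ⊗ b v` (suitably scaled) can be split off. -/
lemma ExtRay.degenerate {a b c : Matrix κ κ ℂ} (h : ExtRay (fromBlocks a c cᴴ b)) (hb : bᴴ = b)
    {v : κ → ℂ} (hv : a *ᵥ v = 0) (hbv : b *ᵥ v ≠ 0) : IsProd (fromBlocks a c cᴴ b) := by
  obtain ⟨hc', hc⟩ := h.1.ker hv
  have hB : b.PosSemidef := h.1.1.submatrix Sum.inr
  have h0 : 0 < star v ⬝ᵥ (b *ᵥ v) :=
    lt_of_le_of_ne (hB.dotProduct_mulVec_nonneg v)
      (fun h => hbv ((hB.dotProduct_mulVec_zero_iff v).1 h.symm))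
  obtain ⟨r, hr⟩ := exists_scale h0
  have h1 : star (r • v) ⬝ᵥ (b *ᵥ (r • v)) = 1 := by
    rw [← hr]
    simp [mulVec_smul]
    ring
  have h2 : c *ᵥ (r • v) = 0 := by rw [mulVec_smul, hc, smul_zero]
  have h3 : cᴴ *ᵥ (r • v) = 0 := by rw [mulVec_smul, hc', smul_zero]
  have hP : IsProd (fromBlocks 0 0 0 (vecMulVec (b *ᵥ (r • v)) (star (b *ᵥ (r • v))))) := by
    rw [isProd_iff]
    exact ⟨0, 1, b *ᵥ (r • v), by simp⟩
  refine h.isProd hP ?_ hP.ppt ⟨sub_rank_one hb h.1.1 h2 h1, ?_⟩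
  · intro h0
    rw [← fromBlocks_zero, fromBlocks_inj, vecMulVec_eq_zero] at h0
    have : b *ᵥ (r • v) = 0 := by simpa using h0.2.2.2
    rw [this] at h1
    simp at h1
  · rw [pT_sub, pT_fromBlocks, pT_fromBlocks]
    have := h.1.2
    rw [pT_fromBlocks] at this
    simpa using sub_rank_one (c := cᴴ) hb (by simpa using this) h3 h1

/-! ### Scalar equations for the normal completion -/

lemma mul_star_eq_zero {x : ℂ} (h : x * star x = 0) : x = 0 := by
  rcases mul_eq_zero.1 h with h | h
  · exact h
  · exact star_eq_zero.1 h

/-- Complex numbers of equal modulus differ by a phase. -/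
lemma exists_phase {X Y : ℂ} (h : X * star X = Y * star Y) :
    ∃ ω : ℂ, ω * star ω = 1 ∧ X = ω * Y := by
  by_cases hY : Y = 0
  · subst hY
    exact ⟨1, by simp, by simpa using mul_star_eq_zero (by simpa using h)⟩
  · have hY' : star Y ≠ 0 := star_ne_zero.2 hY
    refine ⟨X / Y, ?_, by field_simp⟩
    rw [star_div₀]
    field_simp
    exact h

/-- Two pairs with the same sum and product agree up to order. -/
lemma scal_swap {A B C D : ℂ} (h : A * B = C * D) (h1 : A + B = C + D) (h2 : A ≠ C) :
    A = D ∧ B = C := by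
  have : (A - C) * (A - D) = 0 := by linear_combination A * h1 - h
  rcases mul_eq_zero.1 this with h3 | h3
  · exact absurd (sub_eq_zero.1 h3) h2
  · have h4 := sub_eq_zero.1 h3
    exact ⟨h4, by linear_combination h1 - h4⟩

/-- The degenerate case `|β₁| = |α₁|`, `|β₂| = |α₂|` of the relations in `scal_main`: then
`β = ω α` for one phase `ω`, and `h13`, `h23` become a linear system for `(α₁, α₂)` which forces
`|α₁| = |α₂|`. -/
lemma scal_equal {p q r α₁ α₂ β₁ β₂ : ℂ} (hqr : q * star q - r * star r ≠ 0)
    (h12 : α₁ * star α₂ = β₁ * star β₂)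
    (h13 : p * β₁ + q * β₂ = star p * α₁ + star r * α₂)
    (h23 : r * β₁ + p * β₂ = star q * α₁ + star p * α₂)
    (h1 : β₁ * star β₁ = α₁ * star α₁) (h2 : β₂ * star β₂ = α₂ * star α₂) :
    α₁ * star α₁ = α₂ * star α₂ := by
  obtain ⟨ω, hω, hβ1⟩ : ∃ ω : ℂ, ω * star ω = 1 ∧ β₁ = ω * α₁ := exists_phase h1
  obtain ⟨ω', hω', hβ2⟩ : ∃ ω : ℂ, ω * star ω = 1 ∧ β₂ = ω * α₂ := exists_phase h2
  by_cases ha1 : α₁ = 0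
  · subst ha1
    have e : q * β₂ = star r * α₂ := by simpa [hβ1] using h13
    have e' := congrArg star e
    simp only [star_mul', star_star] at e'
    have : (q * star q - r * star r) * (α₂ * star α₂) = 0 := by
      linear_combination (star q * star β₂) * e + (star r * α₂) * e' - q * star q * h2
    rcases mul_eq_zero.1 this with h | h
    · exact absurd h hqr
    · rw [h]; simp
  by_cases ha2 : α₂ = 0
  · subst ha2
    have e : r * β₁ = star q * α₁ := by simpa [hβ2] using h23
    have e' := congrArg star e
    simp only [star_mul', star_star] at e'
    have : (q * star q - r * star r) * (α₁ * star α₁) = 0 := by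
      linear_combination -(star r * star β₁) * e - (star q * α₁) * e' + r * star r * h1
    rcases mul_eq_zero.1 this with h | h
    · exact absurd h hqr
    · rw [h]; simp
  have hωω : ω' = ω := by
    have h3 : α₁ * star α₂ * (ω * star ω' - 1) = 0 := by
      rw [hβ1, hβ2, star_mul'] at h12
      linear_combination -h12
    rcases mul_eq_zero.1 h3 with h | h
    · simp [ha1, ha2] at h
    · linear_combination -ω' * h + ω * hω'
  subst hωω
  subst hβ1 hβ2
  have e1 : (p * ω' - star p) * α₁ = (star r - ω' * q) * α₂ := by linear_combination h13
  have e2 : (p * ω' - star p) * α₂ = (star q - ω' * r) * α₁ := by linear_combination h23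
  have e1' := congrArg star e1
  have e2' := congrArg star e2
  simp only [star_mul', star_sub, star_star] at e1' e2'
  have hT : (star r - ω' * q) * (r - star ω' * star q) =
      (star q - ω' * r) * (q - star ω' * star r) := by
    linear_combination (q * star q - r * star r) * hω'
  set s := p * ω' - star p with hs
  have hss : star s = star p * star ω' - p := by simp [hs]
  rw [← hss] at e1' e2'
  have key : (s * star s + (star r - ω' * q) * (r - star ω' * star q)) *
      (α₁ * star α₁ - α₂ * star α₂) = 0 := by
    linear_combination star s * star α₁ * e1 + (star r - ω' * q) * α₂ * e1'
      - star s * star α₂ * e2 - (star q - ω' * r) * α₁ * e2' + α₁ * star α₁ * hT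
  rcases mul_eq_zero.1 key with h | h
  · exfalso
    have h3 : 0 ≤ s * star s := mul_star_self_nonneg s
    have h4 : 0 ≤ (star r - ω' * q) * (r - star ω' * star q) := by
      have := mul_star_self_nonneg (star r - ω' * q)
      simpa using this
    have h5 : (star r - ω' * q) * (r - star ω' * star q) = 0 :=
      ((add_eq_zero_iff_of_nonneg h3 h4).1 h).2
    have h6 : star r - ω' * q = 0 := mul_star_eq_zero (by simpa using h5)
    have h7 : r - star ω' * star q = 0 := by
      have := congrArg star h6
      simpa using this
    apply hqr
    linear_combination -q * star q * hω' - star r * h7 - star ω' * star q * h6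
  · exact sub_eq_zero.1 h

/-- Coordinate form of the equation for a normal completion. The unknowns are a phase `ω` and a scalar
`f`. The hypotheses are the entries of `[c, cᴴ] = e eᴴ - d dᴴ` for the matrix
`c = [p, q, α₁; r, p, α₂; star β₁, star β₂, 0]` with `e₃ = d₃ = 0`. The third equation determines `ω`
(its two terms have the same modulus); the first two are then solved by `f = p + h`, with `h` given
by the Cramer rule. -/
lemma scal_main {p q r α₁ α₂ β₁ β₂ e₁ e₂ d₁ d₂ : ℂ}
    (h11 : q * star q + α₁ * star α₁ - r * star r - β₁ * star β₁ = e₁ * star e₁ - d₁ * star d₁)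
    (htr : e₁ * star e₁ + e₂ * star e₂ = d₁ * star d₁ + d₂ * star d₂)
    (h33 : β₁ * star β₁ + β₂ * star β₂ = α₁ * star α₁ + α₂ * star α₂)
    (h12 : α₁ * star α₂ = β₁ * star β₂) (he : e₁ * star e₂ = d₁ * star d₂)
    (h13 : p * β₁ + q * β₂ = star p * α₁ + star r * α₂)
    (h23 : r * β₁ + p * β₂ = star q * α₁ + star p * α₂)
    (hκ : e₁ * star e₁ ≠ d₁ * star d₁) :
    ∃ ω f : ℂ, ω * star ω = 1 ∧
      star p * d₁ + star r * d₂ - ω * (p * e₁ + q * e₂) = d₁ * star f - ω * e₁ * f ∧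
      star q * d₁ + star p * d₂ - ω * (r * e₁ + p * e₂) = d₂ * star f - ω * e₂ * f ∧
      star α₁ * d₁ + star α₂ * d₂ - ω * (star β₁ * e₁ + star β₂ * e₂) = 0 := by
  have he' := congrArg star he
  have h12' := congrArg star h12
  simp only [star_mul', star_star] at he' h12'
  obtain ⟨hA, hB⟩ := scal_swap (A := e₁ * star e₁) (B := e₂ * star e₂) (C := d₁ * star d₁)
    (D := d₂ * star d₂) (by linear_combination he * star e₁ * e₂ + d₁ * star d₂ * he') htr hκ
  have hδ : α₁ * star α₁ = β₂ * star β₂ := by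
    by_cases hx : β₁ * star β₁ = α₁ * star α₁
    · have h2 : β₂ * star β₂ = α₂ * star α₂ := by linear_combination h33 - hx
      rw [h2]
      refine scal_equal (p := p) (q := q) (r := r) ?_ h12 h13 h23 hx h2
      intro h0
      apply hκ
      linear_combination -h11 + h0 - hx
    · exact (scal_swap (A := β₁ * star β₁) (B := β₂ * star β₂) (C := α₁ * star α₁)
        (D := α₂ * star α₂)
        (by linear_combination -h12 * star α₁ * α₂ - β₁ * star β₂ * h12') h33 hx).2.symm
  obtain ⟨ω, hω, hX⟩ := exists_phase (X := star α₁ * d₁ + star α₂ * d₂)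
    (Y := star β₁ * e₁ + star β₂ * e₂) (by
      simp only [star_add, star_mul', star_star]
      have hδ' : α₂ * star α₂ = β₁ * star β₁ := by linear_combination -h33 - hδ
      linear_combination hδ * d₁ * star d₁ + hδ' * d₂ * star d₂ - β₁ * star β₁ * hA
        - β₂ * star β₂ * hB + h12' * d₁ * star d₂ - star β₁ * β₂ * he
        - star β₂ * β₁ * he' + h12 * d₂ * star d₁)
  -- The moduli satisfy `|e₁| = |d₂|`, `|e₂| = |d₁|`; together with `he` a single phase `η` relates
  -- `(ω e₁, ω e₂)` to `(star d₂, star d₁)`.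
  obtain ⟨η, hη, he1, he2⟩ : ∃ η : ℂ, η * star η = 1 ∧ ω * e₁ = η * star d₂ ∧
      ω * e₂ = η * star d₁ := by
    by_cases hd2 : d₂ = 0
    · subst hd2
      have he1 : e₁ = 0 := mul_star_eq_zero (by simpa using hA)
      obtain ⟨η, hη, h⟩ := exists_phase (X := ω * e₂) (Y := star d₁) (by
        simp only [star_mul', star_star]
        linear_combination hB + e₂ * star e₂ * hω)
      exact ⟨η, hη, by simp [he1], h⟩
    · obtain ⟨η, hη, h⟩ := exists_phase (X := ω * e₁) (Y := star d₂) (by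
        simp only [star_mul', star_star]
        linear_combination hA + e₁ * star e₁ * hω)
      refine ⟨η, hη, h, ?_⟩
      have hz : (ω * e₂ - η * star d₁) * d₂ = 0 := by
        have h' := congrArg star h
        simp only [star_mul', star_star] at h'
        linear_combination η * he' - ω * e₂ * d₂ * hη + η * star e₁ * e₂ * hω - η * ω * e₂ * h'
      rcases mul_eq_zero.1 hz with h0 | h0
      · exact sub_eq_zero.1 h0
      · exact absurd h0 hd2
  have hΔ : d₁ * star d₁ - d₂ * star d₂ ≠ 0 := by
    rw [← hA]
    exact sub_ne_zero.2 hκ.symm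
  set Δ := d₁ * star d₁ - d₂ * star d₂ with hΔd
  have hΔs : star Δ = Δ := by
    simp only [hΔd, star_sub, star_mul', star_star]
    ring
  set u := star r * d₂ - q * η * star d₁ with hu
  set v := star q * d₁ - r * η * star d₂ with hv
  obtain ⟨h, hh⟩ : ∃ h : ℂ, h = (d₁ * star u - d₂ * star v) / Δ := ⟨_, rfl⟩
  have hh' : star h = (star d₁ * u - star d₂ * v) / Δ := by
    rw [hh, star_div₀, hΔs]
    simp only [star_sub, star_mul', star_star]
  have hh1 : h * Δ = d₁ * star u - d₂ * star v := by rw [hh]; field_simp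
  have hh2 : star h * Δ = star d₁ * u - star d₂ * v := by rw [hh']; field_simp
  have hus : star u = r * star d₂ - star q * star η * d₁ := by simp [hu]
  have hvs : star v = q * star d₁ - star r * star η * d₂ := by simp [hv]
  have hh3 : η * h * Δ = d₂ * u - d₁ * v := by
    rw [hus, hvs] at hh1
    rw [hu, hv]
    linear_combination η * hh1 + (star r * d₂ ^ 2 - star q * d₁ ^ 2) * hη
  have r1 : u = d₁ * star h - star d₂ * (η * h) := by
    apply mul_right_cancel₀ hΔ
    linear_combination -d₁ * hh2 + star d₂ * hh3 + u * hΔd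
  have r2 : v = d₂ * star h - star d₁ * (η * h) := by
    apply mul_right_cancel₀ hΔ
    linear_combination -d₂ * hh2 + star d₁ * hh3 + v * hΔd
  refine ⟨ω, p + h, hω, ?_, ?_, ?_⟩
  · rw [star_add]
    linear_combination r1 - hu + (h) * he1 - q * he2
  · rw [star_add]
    linear_combination r2 - hv + (h) * he2 - r * he1
  · linear_combination hX

/-! ### Normal completion in dimension three -/

/-- Let `c` be a `3 × 3` matrix whose self-commutator is `e eᴴ - d dᴴ`, nonzero and diagonal with last
entry zero. After multiplying `e` by a phase, `[c, d; eᴴ, f]` is normal for a suitable scalar `f`: the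
conclusion is the off-diagonal part of that normality. -/
lemma completion_three {c : Matrix (Fin 3) (Fin 3) ℂ} {e d μ : Fin 3 → ℂ}
    (hK : c * cᴴ - cᴴ * c = vecMulVec e (star e) - vecMulVec d (star d))
    (hμ : vecMulVec e (star e) - vecMulVec d (star d) = diagonal μ) (hμ2 : μ 2 = 0)
    (hμ0 : μ ≠ 0) :
    ∃ ω f : ℂ, ω * star ω = 1 ∧
      cᴴ *ᵥ d - c *ᵥ (ω • e) = star f • d - f • (ω • e) := by
  have ent : ∀ i j, e i * star (e j) - d i * star (d j) = diagonal μ i j := by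
    intro i j
    rw [← hμ]
    simp [vecMulVec_apply]
  have entc : ∀ i j, (c * cᴴ) i j - (cᴴ * c) i j = diagonal μ i j := by
    intro i j
    rw [← hμ, ← hK]
    simp
  have hsum : μ 0 + μ 1 = 0 := by
    have h1 : (c * cᴴ - cᴴ * c).trace = 0 := by
      rw [trace_sub, trace_mul_comm, sub_self]
    rw [hK, hμ, trace_diagonal, Fin.sum_univ_three, hμ2, add_zero] at h1
    exact h1
  have hμ00 : μ 0 ≠ 0 := by
    intro h0
    apply hμ0
    funext i
    fin_cases i
    · exact h0
    · simpa [h0] using hsum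
    · exact hμ2
  -- `tr ([c, cᴴ] c) = 0` compares the first two diagonal entries of `c`.
  have hp : c 1 1 = c 0 0 := by
    have h1 : ((c * cᴴ - cᴴ * c) * c).trace = 0 := by
      rw [Matrix.sub_mul, trace_sub, Matrix.mul_assoc, trace_mul_comm, sub_self]
    rw [hK, hμ, Matrix.trace, Fin.sum_univ_three] at h1
    simp only [diag_apply, diagonal_mul, hμ2, zero_mul, add_zero] at h1
    have h2 : μ 0 * (c 1 1 - c 0 0) = 0 := by linear_combination c 1 1 * hsum - h1
    exact sub_eq_zero.1 ((mul_eq_zero.1 h2).resolve_left hμ00)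
  have e22 := ent 2 2
  have e02 := ent 0 2
  have e20 := ent 2 0
  have e00 := ent 0 0
  have e11 := ent 1 1
  have e01 := ent 0 1
  simp only [diagonal_apply_eq, hμ2] at e22 e00 e11
  rw [diagonal_apply_ne _ (by decide)] at e02 e20 e01
  have he2 : e 2 = 0 := by
    by_contra hne
    apply hμ00
    have h1 : (e 2 * star (e 2)) * μ 0 = 0 := by
      linear_combination -(e 2 * star (e 2)) * e00 + e 2 * star (e 0) * e02
        + d 0 * star (d 2) * e20 - d 0 * star (d 0) * e22
    refine (mul_eq_zero.1 h1).resolve_left ?_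
    exact fun h => hne (mul_star_eq_zero h)
  have hd2 : d 2 = 0 := by
    rw [he2] at e22
    exact mul_star_eq_zero (by linear_combination -e22)
  have c00 := entc 0 0
  have c01 := entc 0 1
  have c02 := entc 0 2
  have c12 := entc 1 2
  have c22 := entc 2 2
  simp only [diagonal_apply_eq, hμ2, mul_apply, Fin.sum_univ_three, conjTranspose_apply, hp]
    at c00 c01 c02 c12 c22
  rw [diagonal_apply_ne _ (by decide)] at c01 c02 c12
  -- Subtracting the scalar `c 2 2` does not change the commutator and makes the last entry zero.
  obtain ⟨ω, f, hω, r1, r2, r3⟩ := scal_main (p := c 0 0 - c 2 2) (q := c 0 1) (r := c 1 0)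
    (α₁ := c 0 2) (α₂ := c 1 2) (β₁ := star (c 2 0)) (β₂ := star (c 2 1)) (e₁ := e 0) (e₂ := e 1)
    (d₁ := d 0) (d₂ := d 1)
    (by simp only [star_star]; linear_combination c00 - e00)
    (by linear_combination e00 + e11 + hsum)
    (by simp only [star_star]; linear_combination c22)
    (by simp only [star_star]; linear_combination c01)
    (by linear_combination e01)
    (by simp only [star_sub]; linear_combination c02)
    (by simp only [star_sub]; linear_combination c12)
    (by
      intro h
      apply hμ00
      linear_combination -e00 + h)
  refine ⟨ω, f + c 2 2, hω, ?_⟩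
  simp only [star_sub, star_star] at r1 r2 r3
  funext i
  fin_cases i
  · simp [mulVec, dotProduct, Fin.sum_univ_three, he2, hd2] at r1 ⊢
    linear_combination r1
  · simp [mulVec, dotProduct, Fin.sum_univ_three, he2, hd2, hp] at r2 ⊢
    linear_combination r2
  · simp [mulVec, dotProduct, Fin.sum_univ_three, he2, hd2] at r3 ⊢
    linear_combination r3

/-- If `c` is the corner of a normal matrix `N = [c, d; eᴴ, f]`, which is what `hK` and `hf` express,
then `[1, c; cᴴ, cᴴ c + e eᴴ]` is the compression of `rhoN N`, so it is a product when extreme. The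
condition `d ≠ 0` ensures that no eigenvector of `N` is killed by the compression. -/
lemma ExtRay.isProd_of_completion {c : Matrix κ κ ℂ} {e d : κ → ℂ} {f : ℂ}
    (hK : c * cᴴ - cᴴ * c = vecMulVec e (star e) - vecMulVec d (star d))
    (hf : cᴴ *ᵥ d - c *ᵥ e = star f • d - f • e) (hd : d ≠ 0)
    (h : ExtRay (fromBlocks 1 c cᴴ (cᴴ * c + vecMulVec e (star e)))) :
    IsProd (fromBlocks 1 c cᴴ (cᴴ * c + vecMulVec e (star e))) := by
  have hed : star e ⬝ᵥ e = star d ⬝ᵥ d := by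
    have h1 : (c * cᴴ - cᴴ * c).trace = 0 := by
      rw [trace_sub, trace_mul_comm, sub_self]
    rw [hK, trace_sub, trace_vecMulVec, trace_vecMulVec, sub_eq_zero] at h1
    rwa [dotProduct_comm, dotProduct_comm (star d)]
  set N : Matrix (κ ⊕ Unit) (κ ⊕ Unit) ℂ :=
    fromBlocks c (replicateCol Unit d) (replicateRow Unit (star e)) (f • 1) with hNd
  have hNH : Nᴴ = fromBlocks cᴴ (replicateCol Unit e) (replicateRow Unit (star d)) (star f • 1) := by
    rw [hNd, fromBlocks_conjTranspose]
    simp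
  have hKK : cᴴ * c + vecMulVec e (star e) = c * cᴴ + vecMulVec d (star d) := by
    have := hK
    rw [sub_eq_sub_iff_add_eq_add] at this
    rw [this]; exact add_comm _ _
  have hff : cᴴ *ᵥ d + f • e = c *ᵥ e + star f • d := by
    have := hf
    rw [sub_eq_sub_iff_add_eq_add] at this
    rw [this]; exact add_comm _ _
  have hff' := congrArg star hff
  simp only [star_add, star_mulVec, star_smul, conjTranspose_conjTranspose, star_star] at hff'
  have hN : Nᴴ * N = N * Nᴴ := by
    rw [hNH, hNd, fromBlocks_multiply, fromBlocks_multiply]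
    congr 1
    · simpa [← vecMulVec_eq] using hKK
    · ext i j
      have := congrFun hff i
      simp [Matrix.mul_apply, mulVec, dotProduct] at this ⊢
      linear_combination this
    · ext i j
      have := congrFun hff' j
      simp [Matrix.mul_apply, vecMul, dotProduct] at this ⊢
      linear_combination this
    · ext i j
      simp [Matrix.mul_apply, dotProduct] at hed ⊢
      rw [hed]
      simp [mul_comm]
  set V : Matrix κ (κ ⊕ Unit) ℂ := fromCols 1 0 with hV
  have hρ : fromBlocks 1 c cᴴ (cᴴ * c + vecMulVec e (star e)) = locConj V (rhoN N) := by
    rw [rhoN, locConj_fromBlocks, hNH, hNd, fromBlocks_multiply, hV, conjTranspose_fromCols_eq_fromRows_conjTranspose]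
    simp [fromCols_mul_fromBlocks, fromCols_mul_fromRows, ← vecMulVec_eq]
  rw [hρ] at h ⊢
  obtain ⟨z, y, hy, hNy⟩ := exists_eigen N
  refine normal_ext hN V h hNy ?_
  intro h0
  have h1 : ∀ i, y (Sum.inl i) = 0 := by
    intro i
    have := congrFun h0 i
    simpa [hV, fromCols_mulVec] using this
  have h2 : y (Sum.inr ()) ≠ 0 := by
    intro h2
    apply hy
    funext i
    rcases i with i | i
    · exact h1 i
    · exact h2
  apply hd
  funext i
  have := congrFun hNy (Sum.inl i)
  rw [hNd] at this
  simp [mulVec, dotProduct, h1] at this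
  exact this.resolve_right h2

/-! ### Extreme rays with identity corner -/

lemma ExtRay.isProd_of_normal [Nonempty κ] {N : Matrix κ κ ℂ} (hN : Nᴴ * N = N * Nᴴ)
    (h : ExtRay (rhoN N)) : IsProd (rhoN N) := by
  obtain ⟨z, y, hy, hNy⟩ := exists_eigen N
  have := normal_ext hN 1 (by rwa [locConj_one]) hNy (by rwa [one_mulVec])
  rwa [locConj_one] at this

lemma det_sub_rank_one (hcard : Fintype.card κ = 3) (e d : κ → ℂ) :
    (vecMulVec e (star e) - vecMulVec d (star d)).det = 0 := by
  rw [← det_submatrix_equiv_self (Fintype.equivFinOfCardEq hcard).symm, det_fin_three]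
  simp only [submatrix_apply, Matrix.sub_apply, vecMulVec_apply]
  ring

/-- Local dimension `3`, both Schur complements `b - cᴴ c = e eᴴ` and `b - c cᴴ = d dᴴ` of rank at most
one. If the self-commutator of `c` vanishes, either `rhoN c` is already the matrix or the product
`(0, 1) ⊗ e` splits off. Otherwise a unitary change of basis diagonalises the commutator, which is
singular, and `c` has a normal completion. -/
lemma ExtRay.isProd_of_rank_one (hcard : Fintype.card κ = 3) {c : Matrix κ κ ℂ} {e d : κ → ℂ}
    (hK : c * cᴴ - cᴴ * c = vecMulVec e (star e) - vecMulVec d (star d))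
    (h : ExtRay (fromBlocks 1 c cᴴ (cᴴ * c + vecMulVec e (star e)))) :
    IsProd (fromBlocks 1 c cᴴ (cᴴ * c + vecMulVec e (star e))) := by
  have : Nonempty κ := Fintype.card_pos_iff.1 (by omega)
  by_cases hK0 : vecMulVec e (star e) - vecMulVec d (star d) = 0
  · have hN : cᴴ * c = c * cᴴ := by
      rw [hK0, sub_eq_zero] at hK
      exact hK.symm
    by_cases he : e = 0
    · subst he
      have hr : fromBlocks 1 c cᴴ (cᴴ * c + vecMulVec 0 (star 0)) = rhoN c := by simp [rhoN]
      rw [hr] at h ⊢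
      exact h.isProd_of_normal hN
    · have hP : IsProd (fromBlocks 0 0 0 (vecMulVec e (star e))) := by
        rw [isProd_iff]
        exact ⟨0, 1, e, by simp⟩
      refine h.isProd hP ?_ hP.ppt ?_
      · intro h0
        rw [← fromBlocks_zero, fromBlocks_inj, vecMulVec_eq_zero] at h0
        simp [he] at h0
      · have : fromBlocks 1 c cᴴ (cᴴ * c + vecMulVec e (star e))
            - fromBlocks 0 0 0 (vecMulVec e (star e)) = rhoN c := by
          rw [rhoN, sub_eq_add_neg, fromBlocks_neg, fromBlocks_add]
          simp
        rw [this]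
        exact rhoN_ppt c hN
  · set K := vecMulVec e (star e) - vecMulVec d (star d) with hKd
    have hKH : K.IsHermitian := by
      rw [IsHermitian, hKd]
      simp [conjTranspose_vecMulVec]
    obtain ⟨U, hU1, hU2, hU⟩ := exists_unitary_diag hKH
    obtain ⟨i, hi⟩ : ∃ i, hKH.eigenvalues i = 0 := by
      have h1 : K.det = 0 := det_sub_rank_one hcard e d
      rw [hKH.det_eq_prod_eigenvalues, Finset.prod_eq_zero_iff] at h1
      obtain ⟨i, -, hi⟩ := h1
      exact ⟨i, by simpa using hi⟩
    set l := hKH.eigenvalues with hl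
    -- Enumerate `κ` so that the zero eigenvalue comes last.
    let σ₀ := (Fintype.equivFinOfCardEq hcard).symm
    let σ : Fin 3 ≃ κ := σ₀.trans (Equiv.swap (σ₀ 2) i)
    have hσ : σ 2 = i := by simp [σ]
    set V : Matrix κ (Fin 3) ℂ := U.submatrix id σ with hV
    have hVH : Vᴴ = Uᴴ.submatrix σ id := by rw [hV, conjTranspose_submatrix]
    have hV1 : V * Vᴴ = 1 := by
      rw [hVH, hV, submatrix_mul_equiv, hU1]; simp
    have hV2 : Vᴴ * V = 1 := by
      rw [hVH, hV]
      have := submatrix_mul_equiv Uᴴ U σ (Equiv.refl κ) σ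
      simp only [Equiv.coe_refl] at this
      rw [this, hU2]
      simp
    have hVK : Vᴴ * K * V = diagonal (fun j => (l (σ j) : ℂ)) := by
      have h1 : Uᴴ * K * U = diagonal (fun i => (l i : ℂ)) := by
        rw [hU, ← Matrix.mul_assoc, ← Matrix.mul_assoc, hU2, Matrix.one_mul, Matrix.mul_assoc, hU2,
          Matrix.mul_one]
      have h2 : Vᴴ * K * V = (Uᴴ * K * U).submatrix σ σ := by
        rw [hVH, hV]
        ext a b
        simp [Matrix.mul_apply]
      rw [h2, h1]
      ext a b
      simp [diagonal_apply]
    have hconj : ∀ A B : Matrix κ κ ℂ, Vᴴ * A * V * (Vᴴ * B * V) = Vᴴ * (A * B) * V := by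
      intro A B
      calc Vᴴ * A * V * (Vᴴ * B * V) = Vᴴ * A * (V * Vᴴ) * B * V := by
            simp only [Matrix.mul_assoc]
        _ = _ := by rw [hV1, Matrix.mul_one]; simp only [Matrix.mul_assoc]
    have hvec : ∀ y : κ → ℂ, vecMulVec (Vᴴ *ᵥ y) (star (Vᴴ *ᵥ y))
        = Vᴴ * vecMulVec y (star y) * V := by
      intro y
      rw [mul_vecMulVec, vecMulVec_mul, star_mulVec, conjTranspose_conjTranspose]
    set c' := Vᴴ * c * V with hc'
    have hc'H : c'ᴴ = Vᴴ * cᴴ * V := by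
      simp [hc', conjTranspose_mul, Matrix.mul_assoc]
    have hK1 : c' * c'ᴴ - c'ᴴ * c' = vecMulVec (Vᴴ *ᵥ e) (star (Vᴴ *ᵥ e))
        - vecMulVec (Vᴴ *ᵥ d) (star (Vᴴ *ᵥ d)) := by
      rw [hc'H, hc', hconj, hconj, hvec, hvec, ← Matrix.sub_mul, ← Matrix.mul_sub, hK,
        ← Matrix.sub_mul, ← Matrix.mul_sub]
    have hK2 : vecMulVec (Vᴴ *ᵥ e) (star (Vᴴ *ᵥ e))
        - vecMulVec (Vᴴ *ᵥ d) (star (Vᴴ *ᵥ d)) = diagonal (fun j => (l (σ j) : ℂ)) := by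
      rw [hvec, hvec, ← Matrix.sub_mul, ← Matrix.mul_sub, ← hVK]
    have hl0 : (fun j => (l (σ j) : ℂ)) ≠ 0 := by
      intro h0
      apply hK0
      have : (fun i => (l i : ℂ)) = 0 := by
        funext i
        simpa using congrFun h0 (σ.symm i)
      rw [hU, this]
      simp
    obtain ⟨ω, f, hω, hf⟩ := completion_three hK1 hK2 (by simp [hσ, hi]) hl0
    have hωe : vecMulVec (ω • (Vᴴ *ᵥ e)) (star (ω • (Vᴴ *ᵥ e)))
        = vecMulVec (Vᴴ *ᵥ e) (star (Vᴴ *ᵥ e)) := by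
      rw [star_smul, smul_vecMulVec, vecMulVec_smul, smul_smul, hω, one_smul]
    have hback : locConj V (locConj Vᴴ (fromBlocks 1 c cᴴ (cᴴ * c + vecMulVec e (star e))))
        = fromBlocks 1 c cᴴ (cᴴ * c + vecMulVec e (star e)) := by
      rw [locConj_locConj, hV1, locConj_one]
    have hfwd : locConj Vᴴ (fromBlocks 1 c cᴴ (cᴴ * c + vecMulVec e (star e))) =
        fromBlocks 1 c' c'ᴴ (c'ᴴ * c' + vecMulVec (ω • (Vᴴ *ᵥ e)) (star (ω • (Vᴴ *ᵥ e)))) := by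
      rw [locConj_fromBlocks, conjTranspose_conjTranspose, hωe, hvec, hc'H, hc', hconj, Matrix.mul_one,
        hV2, Matrix.mul_add, Matrix.add_mul]
    have hext := h.lc V Vᴴ hV2 hback
    rw [← hback]
    refine IsProd.lc ?_ V
    rw [hfwd] at hext ⊢
    refine hext.isProd_of_completion (d := Vᴴ *ᵥ d) (f := f) (by rw [hK1, hωe]) hf ?_
    -- If `d = 0`, the commutator is positive semidefinite with trace zero, hence zero.
    intro hd0
    have h1 : vecMulVec (Vᴴ *ᵥ e) (star (Vᴴ *ᵥ e)) = diagonal (fun j => (l (σ j) : ℂ)) := by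
      rw [← hK2, hd0]; simp
    have h2 : (vecMulVec (Vᴴ *ᵥ e) (star (Vᴴ *ᵥ e))).trace = 0 := by
      have h3 : (c' * c'ᴴ - c'ᴴ * c').trace = 0 := by
        rw [trace_sub, trace_mul_comm, sub_self]
      rw [hK1, hd0] at h3
      simpa using h3
    have h4 := (posSemidef_vecMulVec_self_star (Vᴴ *ᵥ e)).trace_eq_zero_iff.1 h2
    rw [h1, diagonal_eq_zero] at h4
    exact hl0 h4

lemma schur_posSemidef {b c : Matrix κ κ ℂ} (h : (fromBlocks 1 c cᴴ b).PosSemidef) :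
    (b - cᴴ * c).PosSemidef := by
  have h1 := h.mul_mul_conjTranspose_same (fromCols (-cᴴ) (1 : Matrix κ κ ℂ))
  rw [fromCols_mul_fromBlocks, conjTranspose_fromCols_eq_fromRows_conjTranspose,
    fromCols_mul_fromRows] at h1
  simpa [sub_eq_add_neg, add_comm] using h1

/-- A full rank factorisation of the Schur complement `b - cᴴ c` gives one of `[1, c; cᴴ, b]`; so the
rank of the latter is `card κ + k`. -/
lemma exists_factor_blocks {b c : Matrix κ κ ℂ} {k : ℕ} {F : Matrix κ (Fin k) ℂ}
    {L : Matrix (Fin k) κ ℂ} (hF : b - cᴴ * c = F * Fᴴ) (hL : L * F = 1) :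
    ∃ (V : Matrix (κ ⊕ κ) (κ ⊕ Fin k) ℂ) (L' : Matrix (κ ⊕ Fin k) (κ ⊕ κ) ℂ),
      fromBlocks 1 c cᴴ b = V * Vᴴ ∧ L' * V = 1 := by
  refine ⟨fromBlocks 1 0 cᴴ F, fromBlocks 1 0 (-(L * cᴴ)) L, ?_, ?_⟩
  · rw [fromBlocks_conjTranspose, fromBlocks_multiply]
    simp [← hF]
  · rw [fromBlocks_multiply, ← fromBlocks_one]
    simp [hL]

/-- Extreme rays with `a = 1` and local dimension `n ≤ 3` are products. Let `k`, `k'` be the ranks of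
the two Schur complements. They have the same trace, so if one vanishes both do and `c` is normal.
Otherwise `(n + k)² + (n + k')² ≤ 4 n² + 1` leaves only `n = 3`, `k = k' = 1`. -/
lemma ExtRay.isProd_one [Nonempty κ] (hcard : Fintype.card κ ≤ 3) {b c : Matrix κ κ ℂ}
    (h : ExtRay (fromBlocks 1 c cᴴ b)) : IsProd (fromBlocks 1 c cᴴ b) := by
  have hE := schur_posSemidef h.1.1
  have hD : (b - cᴴᴴ * cᴴ).PosSemidef := by
    apply schur_posSemidef
    have := h.1.2
    rwa [pT_fromBlocks, ← conjTranspose_conjTranspose c, conjTranspose_conjTranspose cᴴ] at this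
  obtain ⟨k, F, L, hF, hL⟩ := exists_factor hE
  obtain ⟨k', F', L', hF', hL'⟩ := exists_factor hD
  obtain ⟨V, M, hV, hM⟩ := exists_factor_blocks hF hL
  obtain ⟨V', M', hV', hM'⟩ := exists_factor_blocks hF' hL'
  have hpos : 0 < Fintype.card κ := Fintype.card_pos
  have htr : (fromBlocks 1 c cᴴ b).trace ≠ 0 := by
    intro h0
    have h1 := h.1.1.trace_eq_zero_iff.1 h0
    rw [← fromBlocks_zero, fromBlocks_inj] at h1
    exact one_ne_zero h1.1
  have hcount := h.count htr V M V' M' hV hM (by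
    rw [pT_fromBlocks]
    simpa using hV') hM'
  simp only [Fintype.card_sum, Fintype.card_fin] at hcount
  rw [conjTranspose_conjTranspose] at hF' hD
  have hnormal : b - cᴴ * c = 0 → b - c * cᴴ = 0 → IsProd (fromBlocks 1 c cᴴ b) := by
    intro h1 h2
    rw [sub_eq_zero] at h1 h2
    have hN : cᴴ * c = c * cᴴ := h1.symm.trans h2
    have hr : fromBlocks 1 c cᴴ b = rhoN c := by rw [rhoN, ← h1]
    rw [hr] at h ⊢
    exact h.isProd_of_normal hN
  have htrE : (b - cᴴ * c).trace = (b - c * cᴴ).trace := by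
    rw [trace_sub, trace_sub, trace_mul_comm c]
  rcases Nat.eq_zero_or_pos k with rfl | hk
  · have h0 : b - cᴴ * c = 0 := by rw [hF]; ext; simp [Matrix.mul_apply]
    refine hnormal h0 (hD.trace_eq_zero_iff.1 ?_)
    rw [← htrE, h0, trace_zero]
  rcases Nat.eq_zero_or_pos k' with rfl | hk'
  · have h0 : b - c * cᴴ = 0 := by rw [hF']; ext; simp [Matrix.mul_apply]
    refine hnormal (hE.trace_eq_zero_iff.1 ?_) h0
    rw [htrE, h0, trace_zero]
  obtain ⟨h3, rfl, rfl⟩ : Fintype.card κ = 3 ∧ k = 1 ∧ k' = 1 := by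
    have h5 : k ≤ 3 := by nlinarith
    have h6 : k' ≤ 3 := by nlinarith
    generalize Fintype.card κ = n at *
    interval_cases n <;> interval_cases k <;> interval_cases k' <;> simp_all
  have hrank : ∀ G : Matrix κ (Fin 1) ℂ, G * Gᴴ
      = vecMulVec (fun i => G i 0) (star (fun i => G i 0)) := by
    intro G
    ext i j
    simp [Matrix.mul_apply, vecMulVec_apply]
  rw [hrank] at hF hF'
  have hb : b = cᴴ * c + vecMulVec (fun i => F i 0) (star fun i => F i 0) := by
    rw [← hF]; abel
  have hK : c * cᴴ - cᴴ * c = vecMulVec (fun i => F i 0) (star fun i => F i 0)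
      - vecMulVec (fun i => F' i 0) (star fun i => F' i 0) := by
    rw [← hF, ← hF']; abel
  rw [hb] at h ⊢
  exact h.isProd_of_rank_one h3 hK

/-! ### Extreme rays in general -/

open scoped MatrixOrder Matrix.Norms.L2Operator in
lemma exists_square_factor {a : Matrix κ κ ℂ} (ha : a.PosSemidef) :
    ∃ B : Matrix κ κ ℂ, a = Bᴴ * B :=
  CStarAlgebra.nonneg_iff_eq_star_mul_self.mp ha.nonneg

/-- Coordinates on the hyperplane orthogonal to `v`: `W` forgets the coordinate `i₀`, and `V` restores
it from the relation `⟨v, x⟩ = 0`. -/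
lemma exists_compression {v : κ → ℂ} {i₀ : κ} (hv : v i₀ ≠ 0) :
    ∃ (V : Matrix κ {i // i ≠ i₀} ℂ) (W : Matrix {i // i ≠ i₀} κ ℂ), W * V = 1 ∧
      ∀ M : Matrix κ κ ℂ, Mᴴ *ᵥ v = 0 → V * (W * M) = M := by
  let W : Matrix {i // i ≠ i₀} κ ℂ := of fun i j => if (i : κ) = j then 1 else 0
  let V : Matrix κ {i // i ≠ i₀} ℂ := of fun i j =>
    if i = i₀ then - star (v j) / star (v i₀) else if i = j then 1 else 0
  have hWM : ∀ {m : Type} (M : Matrix κ m ℂ) i j, (W * M) i j = M i j := by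
    intro m M i j
    simp [W, Matrix.mul_apply]
  refine ⟨V, W, ?_, ?_⟩
  · ext i j
    rw [hWM]
    simp [V, i.2, one_apply, Subtype.ext_iff]
  · intro M hM
    ext i j
    rw [Matrix.mul_apply]
    simp only [hWM]
    by_cases hi : i = i₀
    · subst hi
      have h1 : ∑ k, star (v k) * M k j = 0 := by
        have := congrArg star (congrFun hM j)
        simpa [mulVec, dotProduct, mul_comm] using this
      rw [Fintype.sum_eq_add_sum_subtype_ne _ i] at h1
      have hv' : star (v i) ≠ 0 := star_ne_zero.2 hv
      simp only [V, of_apply, if_true]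
      have h2 : ∑ x : {k // k ≠ i}, -star (v x) / star (v i) * M x j
          = (- ∑ x : {k // k ≠ i}, star (v x) * M x j) / star (v i) := by
        rw [neg_div, Finset.sum_div, ← Finset.sum_neg_distrib]
        exact Finset.sum_congr rfl fun x _ => by ring
      rw [h2, div_eq_iff hv']
      linear_combination -h1
    · rw [Finset.sum_eq_single (⟨i, hi⟩ : {i // i ≠ i₀})]
      · simp [V, hi]
      · intro k _ hk
        have : i ≠ k := fun h => hk (Subtype.ext h.symm)
        simp [V, hi, this]
      · simp

/-- Extreme rays of the PPT cone of `ℂ² ⊗ ℂⁿ`, `n ≤ 3`, are products. The proof is by induction on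
`n`: if the corner `a` is invertible a local conjugation makes it `1`; if `a v = 0`, then either
`b v ≠ 0` and a product splits off, or `v` is in the kernel of all blocks and the dimension drops. -/
theorem ExtRay.isProd_of_card_le (n : ℕ) (hn : n ≤ 3) : ∀ (κ : Type) [Fintype κ] [DecidableEq κ],
    Fintype.card κ = n → ∀ ρ : Matrix (κ ⊕ κ) (κ ⊕ κ) ℂ, ExtRay ρ → IsProd ρ := by
  induction n with
  | zero =>
    intro κ _ _ hκ ρ _
    have := Fintype.card_eq_zero_iff.1 hκ
    exact ⟨0, 0, 0, by ext i; exact isEmptyElim i⟩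
  | succ n ih =>
    intro κ _ _ hκ ρ h
    have hne : Nonempty κ := Fintype.card_pos_iff.1 (by omega)
    obtain ⟨a, b, c, rfl, ha, hb⟩ := h.1.blocks
    have hA : a.PosSemidef := h.1.1.submatrix Sum.inl
    by_cases hdet : a.det = 0
    · obtain ⟨v, hv0, hav⟩ := exists_mulVec_eq_zero_iff.2 hdet
      by_cases hbv : b *ᵥ v = 0
      · obtain ⟨hcv', hcv⟩ := h.1.ker hav
        obtain ⟨i₀, hi₀⟩ : ∃ i, v i ≠ 0 := by
          by_contra! hall
          exact hv0 (funext hall)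
        obtain ⟨V, W, hWV, hVW⟩ := exists_compression hi₀
        have hleft : ∀ M : Matrix κ κ ℂ, Mᴴ *ᵥ v = 0 → V * W * M = M := by
          intro M hM
          rw [Matrix.mul_assoc, hVW M hM]
        have hboth : ∀ M : Matrix κ κ ℂ, Mᴴ *ᵥ v = 0 → M *ᵥ v = 0 →
            V * W * M * (V * W)ᴴ = M := by
          intro M h1 h2
          rw [hleft M h1]
          have := congrArg conjTranspose (hleft Mᴴ (by simpa using h2))
          rwa [conjTranspose_mul, conjTranspose_conjTranspose] at this
        have hback : locConj V (locConj W (fromBlocks a c cᴴ b)) = fromBlocks a c cᴴ b := by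
          rw [locConj_locConj, locConj_fromBlocks, hboth a (by rwa [ha]) hav, hboth c hcv' hcv,
            hboth cᴴ (by simpa using hcv) hcv', hboth b (by rwa [hb]) hbv]
        rw [← hback]
        refine IsProd.lc ?_ V
        refine ih (by omega) _ ?_ _ (h.lc V W hWV hback)
        rw [Fintype.card_subtype_compl, Fintype.card_subtype_eq, hκ]
        omega
      · exact h.degenerate hb hav hbv
    · obtain ⟨B, hB⟩ := exists_square_factor hA
      have hBdet : IsUnit (Bᴴ).det := by
        rw [isUnit_iff_ne_zero]
        intro h0
        apply hdet
        rw [hB, det_mul, h0, zero_mul]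
      have hWV : (Bᴴ)⁻¹ * Bᴴ = 1 := nonsing_inv_mul _ hBdet
      have hVW : Bᴴ * (Bᴴ)⁻¹ = 1 := mul_nonsing_inv _ hBdet
      have hback : locConj Bᴴ (locConj (Bᴴ)⁻¹ (fromBlocks a c cᴴ b)) = fromBlocks a c cᴴ b := by
        rw [locConj_locConj, hVW, locConj_one]
      have hfwd : locConj (Bᴴ)⁻¹ (fromBlocks a c cᴴ b) = fromBlocks 1
          ((Bᴴ)⁻¹ * c * ((Bᴴ)⁻¹)ᴴ) ((Bᴴ)⁻¹ * c * ((Bᴴ)⁻¹)ᴴ)ᴴ ((Bᴴ)⁻¹ * b * ((Bᴴ)⁻¹)ᴴ) := by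
        rw [locConj_fromBlocks]
        congr 1
        · rw [hB, ← Matrix.mul_assoc, hWV, Matrix.one_mul]
          have := congrArg conjTranspose hWV
          simpa [conjTranspose_mul] using this
        · simp only [conjTranspose_mul, conjTranspose_conjTranspose, Matrix.mul_assoc]
      have hext := h.lc Bᴴ (Bᴴ)⁻¹ hWV hback
      rw [← hback]
      refine IsProd.lc ?_ _
      rw [hfwd] at hext ⊢
      exact hext.isProd_one (by omega)

/-! ### Krein–Milman and the passage to `M_p(M_q(ℂ))` -/

lemma isClosed_posSemidef : IsClosed {M : Matrix κ κ ℂ | M.PosSemidef} := by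
  have : {M : Matrix κ κ ℂ | M.PosSemidef} =
      {M | Mᴴ = M} ∩ ⋂ x : κ → ℂ, {M | 0 ≤ star x ⬝ᵥ (M *ᵥ x)} := by
    ext M
    simp [posSemidef_iff_dotProduct_mulVec, IsHermitian]
  rw [this]
  refine IsClosed.inter (isClosed_eq (by fun_prop) (by fun_prop)) (isClosed_iInter fun x => ?_)
  exact isClosed_le continuous_const (by fun_prop)

lemma norm_entry_le {M : Matrix κ κ ℂ} (hM : M.PosSemidef) (h1 : M.trace = 1) (i j : κ) :
    ‖M i j‖ ≤ 1 := by
  have hd : ∀ i, 0 ≤ M i i := fun i => hM.diag_nonneg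
  have hle : ∀ i, M i i ≤ 1 := fun i => by
    rw [← h1, Matrix.trace]
    exact Finset.single_le_sum (f := fun i => M i i) (fun i _ => hd i) (Finset.mem_univ i)
  have hdet := (hM.submatrix ![i, j]).det_nonneg
  rw [det_fin_two] at hdet
  simp only [submatrix_apply, cons_val_zero, cons_val_one] at hdet
  have hji : M j i = star (M i j) := by
    conv_lhs => rw [← hM.1]
    rfl
  rw [hji, Complex.star_def, Complex.mul_conj, sub_nonneg] at hdet
  have h2 : ((Complex.normSq (M i j) : ℝ) : ℂ) ≤ 1 :=
    hdet.trans (mul_le_one₀ (hle i) (hd j) (hle j))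
  have h3 : Complex.normSq (M i j) ≤ 1 := by exact_mod_cast h2
  rw [Complex.normSq_eq_norm_sq] at h3
  nlinarith [norm_nonneg (M i j)]

/-- The compact convex base of the PPT cone: PPT matrices of trace one. -/
def pptStates (κ : Type) [Fintype κ] : Set (Matrix (κ ⊕ κ) (κ ⊕ κ) ℂ) :=
  {ρ | PPT ρ ∧ ρ.trace = 1}

lemma continuous_pT {κ : Type} : Continuous (pT (κ := κ)) := by
  refine continuous_pi fun i => continuous_pi fun j => ?_
  rcases i with i | i <;> rcases j with j | j
  · exact continuous_id.matrix_elem (Sum.inl i) (Sum.inl j)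
  · exact continuous_id.matrix_elem (Sum.inr i) (Sum.inl j)
  · exact continuous_id.matrix_elem (Sum.inl i) (Sum.inr j)
  · exact continuous_id.matrix_elem (Sum.inr i) (Sum.inr j)

lemma isCompact_pptStates : IsCompact (pptStates κ) := by
  have hK : IsCompact (Set.pi Set.univ fun _ : κ ⊕ κ => Set.pi Set.univ fun _ : κ ⊕ κ =>
      Metric.closedBall (0 : ℂ) 1) :=
    isCompact_univ_pi fun _ => isCompact_univ_pi fun _ => isCompact_closedBall _ _
  have hC : IsClosed (pptStates κ) := by
    have h1 : IsClosed {ρ : Matrix (κ ⊕ κ) (κ ⊕ κ) ℂ | ρ.PosSemidef} := isClosed_posSemidef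
    exact (h1.inter (h1.preimage continuous_pT)).inter
      (isClosed_eq (by fun_prop) continuous_const)
  refine hK.of_isClosed_subset hC ?_
  rintro ρ ⟨hρ, h1⟩ i - j -
  simpa using norm_entry_le hρ.1 h1 i j

lemma convex_pptStates : Convex ℝ (pptStates κ) := by
  rintro ρ ⟨hρ, h1⟩ σ ⟨hσ, h2⟩ a b ha hb hab
  refine ⟨(hρ.rsmul ha).add (hσ.rsmul hb), ?_⟩
  rw [trace_add, trace_smul, trace_smul, h1, h2, ← add_smul, hab, one_smul]

lemma PPT.trace_eq {ρ : Matrix (κ ⊕ κ) (κ ⊕ κ) ℂ} (h : PPT ρ) :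
    ∃ t : ℝ, 0 ≤ t ∧ ρ.trace = t := by
  have := Complex.nonneg_iff.1 h.1.trace_nonneg
  exact ⟨ρ.trace.re, this.1, Complex.ext (by simp) (by simp [← this.2])⟩

lemma extRay_of_extremePoint {ρ : Matrix (κ ⊕ κ) (κ ⊕ κ) ℂ}
    (h : ρ ∈ (pptStates κ).extremePoints ℝ) : ExtRay ρ := by
  obtain ⟨⟨hρ, h1⟩, hext⟩ := h
  refine ⟨hρ, fun σ hσ hσ' => ?_⟩
  obtain ⟨s, hs, hst⟩ := hσ.trace_eq
  obtain ⟨s', hs', hst'⟩ := hσ'.trace_eq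
  have hss : s + s' = 1 := by
    rw [trace_sub, h1, hst] at hst'
    have : (s : ℂ) + s' = 1 := by rw [← hst']; ring
    exact_mod_cast this
  rcases hs.eq_or_lt with rfl | hs
  · exact ⟨0, by rw [zero_smul]; exact hσ.1.trace_eq_zero_iff.1 (by simpa using hst)⟩
  rcases hs'.eq_or_lt with rfl | hs'
  · have := hσ'.1.trace_eq_zero_iff.1 (by simpa using hst')
    exact ⟨1, by rw [one_smul]; exact (sub_eq_zero.1 this).symm⟩
  refine ⟨s, ?_⟩
  have key : s⁻¹ • σ = ρ := by
    refine hext (x₁ := s⁻¹ • σ) ⟨hσ.rsmul (by positivity), ?_⟩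
      (x₂ := s'⁻¹ • (ρ - σ)) ⟨hσ'.rsmul (by positivity), ?_⟩ ⟨s, s', hs, hs', hss, ?_⟩
    · rw [trace_smul, hst, Complex.real_smul]
      exact_mod_cast inv_mul_cancel₀ hs.ne'
    · rw [trace_smul, hst', Complex.real_smul]
      exact_mod_cast inv_mul_cancel₀ hs'.ne'
    · rw [smul_smul, smul_smul, mul_inv_cancel₀ hs.ne', mul_inv_cancel₀ hs'.ne', one_smul, one_smul]
      abel
  rw [← key, smul_smul, mul_inv_cancel₀ hs.ne', one_smul]

/-- By Krein–Milman, the PPT cone of `ℂ² ⊗ ℂⁿ`, `n ≤ 3`, is contained in every closed convex cone that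
contains all product matrices. -/
theorem PPT.mem_of_card_le (hcard : Fintype.card κ ≤ 3) {C : Set (Matrix (κ ⊕ κ) (κ ⊕ κ) ℂ)}
    (hconv : Convex ℝ C) (hclosed : IsClosed C) (hsmul : ∀ t : ℝ, 0 ≤ t → ∀ ρ ∈ C, t • ρ ∈ C)
    (hprod : ∀ ρ, IsProd ρ → ρ ∈ C) {ρ : Matrix (κ ⊕ κ) (κ ⊕ κ) ℂ} (h : PPT ρ) : ρ ∈ C := by
  have : LocallyConvexSpace ℝ (Matrix (κ ⊕ κ) (κ ⊕ κ) ℂ) :=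
    inferInstanceAs (LocallyConvexSpace ℝ (κ ⊕ κ → κ ⊕ κ → ℂ))
  have hKM := closure_convexHull_extremePoints (isCompact_pptStates (κ := κ)) convex_pptStates
  have hsub : pptStates κ ⊆ C := by
    rw [← hKM]
    refine closure_minimal (convexHull_min (fun σ hσ => ?_) hconv) hclosed
    exact hprod σ (ExtRay.isProd_of_card_le _ hcard κ rfl σ (extRay_of_extremePoint hσ))
  obtain ⟨t, ht, htr⟩ := h.trace_eq
  rcases ht.eq_or_lt with rfl | ht
  · rw [h.1.trace_eq_zero_iff.1 (by simpa using htr)]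
    exact hprod 0 ⟨0, 0, 0, by ext (i | i) j <;> simp [pv, vecMulVec_apply]⟩
  · have h1 : t⁻¹ • ρ ∈ C := by
      refine hsub ⟨h.rsmul (by positivity), ?_⟩
      rw [trace_smul, htr, Complex.real_smul]
      exact_mod_cast inv_mul_cancel₀ ht.ne'
    have h2 := hsmul t ht.le _ h1
    rwa [smul_smul, mul_inv_cancel₀ ht.ne', one_smul] at h2

lemma tensor_mem_matPosCone {p q : ℕ} {s : Matrix (Fin q) (Fin q) ℂ} {x : Matrix (Fin p) (Fin p) ℂ}
    (hs : IsPosElem s) (hx : IsPosElem x) : (of fun i j => x i j • s) ∈ matPosCone p q :=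
  ⟨1, fun _ => s, fun _ => x, fun _ => hs, fun _ => hx, by simp⟩

lemma add_mem_matPosCone {p q : ℕ} {S T : Matrix (Fin p) (Fin p) (Matrix (Fin q) (Fin q) ℂ)}
    (hS : S ∈ matPosCone p q) (hT : T ∈ matPosCone p q) : S + T ∈ matPosCone p q := by
  obtain ⟨k, s, x, hs, hx, rfl⟩ := hS
  obtain ⟨k', s', x', hs', hx', rfl⟩ := hT
  refine ⟨k + k', Fin.append s s', Fin.append x x', ?_, ?_, ?_⟩
  · exact fun l => Fin.addCases (by simpa using hs) (by simpa using hs') l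
  · exact fun l => Fin.addCases (by simpa using hx) (by simpa using hx') l
  · rw [Fin.sum_univ_add]
    simp

lemma smul_mem_matPosCone {p q : ℕ} {S : Matrix (Fin p) (Fin p) (Matrix (Fin q) (Fin q) ℂ)}
    (hS : S ∈ matPosCone p q) {t : ℝ} (ht : 0 ≤ t) : t • S ∈ matPosCone p q := by
  obtain ⟨k, s, x, hs, hx, rfl⟩ := hS
  refine ⟨k, s, fun l => t • x l, hs, fun l => ?_, ?_⟩
  · obtain ⟨b, hb⟩ := hx l
    refine ⟨√t • b, ?_⟩
    change t • x l = _
    rw [hb, star_smul, star_trivial (√t), Matrix.smul_mul, Matrix.mul_smul, smul_smul,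
      Real.mul_self_sqrt ht]
  · rw [Finset.smul_sum]
    refine Finset.sum_congr rfl fun l _ => ?_
    ext i j : 2
    simp [mul_assoc]

lemma convex_closure_matPosCone (p q : ℕ) : Convex ℝ (closure (matPosCone p q)) := by
  apply Convex.closure
  intro S hS T hT a b ha hb _
  exact add_mem_matPosCone (smul_mem_matPosCone hS ha) (smul_mem_matPosCone hT hb)

lemma smul_mem_closure_matPosCone {p q : ℕ}
    {S : Matrix (Fin p) (Fin p) (Matrix (Fin q) (Fin q) ℂ)}
    (hS : S ∈ closure (matPosCone p q)) {t : ℝ} (ht : 0 ≤ t) :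
    t • S ∈ closure (matPosCone p q) :=
  map_mem_closure (continuous_const_smul t) hS fun _ h => smul_mem_matPosCone h ht

/-- Rearrangement of a matrix on `ℂ² ⊗ ℂ^κ` into a `p × p` matrix with entries in `M_q(ℂ)`, the index
`(i, k)` of the latter being read at `h i k`. -/
def unflat {p q : ℕ} (h : Fin p → Fin q → κ ⊕ κ) :
    Matrix (κ ⊕ κ) (κ ⊕ κ) ℂ →ₗ[ℝ] Matrix (Fin p) (Fin p) (Matrix (Fin q) (Fin q) ℂ) where
  toFun ρ := of fun i j => of fun k l => ρ (h i k) (h j l)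
  map_add' _ _ := rfl
  map_smul' _ _ := rfl

lemma continuous_unflat {p q : ℕ} (h : Fin p → Fin q → κ ⊕ κ) : Continuous (unflat h) := by
  refine continuous_pi fun i => continuous_pi fun j => continuous_pi fun k =>
    continuous_pi fun l => ?_
  exact continuous_id.matrix_elem (h i k) (h j l)

lemma isPosElem_vecMulVec {n : ℕ} (y : Fin n → ℂ) : IsPosElem (vecMulVec y (star y)) :=
  exists_square_factor (posSemidef_vecMulVec_self_star y)

/-- If the rearrangement `h` takes product vectors to product vectors, it maps the PPT cone into the
closure of `matPosCone p q`. -/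
lemma unflat_mem {p q : ℕ} (hcard : Fintype.card κ ≤ 3) (h : Fin p → Fin q → κ ⊕ κ)
    (hpv : ∀ (x₀ x₁ : ℂ) (y : κ → ℂ), ∃ (u : Fin p → ℂ) (v : Fin q → ℂ),
      ∀ i k, pv x₀ x₁ y (h i k) = u i * v k)
    {ρ : Matrix (κ ⊕ κ) (κ ⊕ κ) ℂ} (hρ : PPT ρ) : unflat h ρ ∈ closure (matPosCone p q) := by
  refine hρ.mem_of_card_le (C := unflat h ⁻¹' closure (matPosCone p q)) hcard
    ((convex_closure_matPosCone p q).linear_preimage _)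
    (isClosed_closure.preimage (continuous_unflat h)) ?_ ?_
  · intro t ht σ hσ
    rw [Set.mem_preimage, map_smul]
    exact smul_mem_closure_matPosCone hσ ht
  · rintro σ ⟨x₀, x₁, y, rfl⟩
    obtain ⟨u, v, huv⟩ := hpv x₀ x₁ y
    refine subset_closure ?_
    convert! tensor_mem_matPosCone (isPosElem_vecMulVec v) (isPosElem_vecMulVec u) using 1
    ext i j k l
    change vecMulVec (pv x₀ x₁ y) (star (pv x₀ x₁ y)) (h i k) (h j l) = _
    simp [vecMulVec_apply, huv]
    ring

lemma comp_posSemidef {p q : ℕ} {S : Matrix (Fin p) (Fin p) (Matrix (Fin q) (Fin q) ℂ)}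
    (hS : IsPosElem S) : (comp _ _ _ _ _ S).PosSemidef := by
  obtain ⟨b, rfl⟩ := hS
  have : comp _ _ _ _ _ (star b * b) = (comp _ _ _ _ _ b)ᴴ * comp _ _ _ _ _ b := by
    ext ⟨i, k⟩ ⟨j, l⟩
    simp [comp_apply, Matrix.mul_apply, Matrix.sum_apply, star_eq_conjTranspose,
      Fintype.sum_prod_type]
  rw [this]
  exact posSemidef_conjTranspose_mul_self _

end

/-- if `p*q ≤ 6` then `J_p(M_q(ℂ))` is contained in the closure of the
cone `M_q(ℂ)⁺ ⊗ M_p(ℂ)⁺` in `M_p(M_q(ℂ))`. -/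
theorem J_subset_closure_cone_of_mul_le_six (p q : ℕ) (hp : 0 < p) (hq : 0 < q)
    (hpq : p * q ≤ 6) (S : Matrix (Fin p) (Fin p) (Matrix (Fin q) (Fin q) ℂ))
    (hS : IsPosElem S) (hS' : IsPosElem Sᵀ) :
    S ∈ closure (matPosCone p q) := by
  obtain rfl | rfl | ⟨rfl, hq3⟩ | ⟨rfl, hp3⟩ :
      p = 1 ∨ q = 1 ∨ (p = 2 ∧ q ≤ 3) ∨ (q = 2 ∧ p ≤ 3) := by
    by_contra! hcon
    obtain ⟨h1, h2, h3, h4⟩ := hcon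
    have h5 : 2 ≤ p := by omega
    have h6 : 2 ≤ q := by omega
    by_cases hp2 : p = 2
    · subst hp2; have := h3 rfl; omega
    · by_cases hq2 : q = 2
      · subst hq2; have := h4 rfl; omega
      · have h7 : 3 ≤ p := by omega
        have h8 : 3 ≤ q := by omega
        nlinarith
  · refine subset_closure ?_
    obtain ⟨b, hb⟩ := hS
    convert! tensor_mem_matPosCone (s := S 0 0) (x := 1) ⟨b 0 0, ?_⟩ ⟨1, by simp⟩ using 1
    · ext i j : 2
      rw [Subsingleton.elim i 0, Subsingleton.elim j 0]
      simp
    · rw [hb]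
      simp [Matrix.mul_apply, star_eq_conjTranspose]
  · refine subset_closure ?_
    obtain ⟨b, hb⟩ := hS
    convert! tensor_mem_matPosCone (s := 1) (x := of fun i j => S i j 0 0) ⟨1, by simp⟩
      ⟨of fun i j => b i j 0 0, ?_⟩ using 1
    · ext i j k l
      rw [Subsingleton.elim k 0, Subsingleton.elim l 0]
      simp
    · rw [hb]
      ext i j
      simp [Matrix.mul_apply, star_eq_conjTranspose, Matrix.sum_apply]
  -- `p = 2`: the two tensor factors are in the order used above, and `pT` is the block transpose.
  · let g : Fin q ⊕ Fin q → Fin 2 × Fin q := Sum.elim (fun k => (0, k)) (fun k => (1, k))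
    let h : Fin 2 → Fin q → Fin q ⊕ Fin q := ![Sum.inl, Sum.inr]
    have hρ : PPT ((comp _ _ _ _ _ S).submatrix g g) := by
      refine ⟨(comp_posSemidef hS).submatrix g, ?_⟩
      convert (comp_posSemidef hS').submatrix g using 1
      ext (i | i) (j | j) <;> rfl
    have := unflat_mem (by simpa using hq3) h (fun x₀ x₁ y => ⟨![x₀, x₁], y, fun i k => by
      fin_cases i <;> simp [h, pv]⟩) hρ
    convert this using 1
    ext i j k l
    fin_cases i <;> fin_cases j <;> rfl
  -- `q = 2`: transposing the factor `M_q` instead of `M_p` gives the full transpose of `Sᵀ`, which is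
  -- positive semidefinite as well.
  · let g : Fin p ⊕ Fin p → Fin p × Fin 2 := Sum.elim (fun k => (k, 0)) (fun k => (k, 1))
    let h : Fin p → Fin 2 → Fin p ⊕ Fin p := fun i => ![Sum.inl i, Sum.inr i]
    have hρ : PPT ((comp _ _ _ _ _ S).submatrix g g) := by
      refine ⟨(comp_posSemidef hS).submatrix g, ?_⟩
      have e : pT ((comp _ _ _ _ _ S).submatrix g g) =
          ((comp _ _ _ _ _ Sᵀ).submatrix g g)ᵀ := by
        ext i j
        rcases i with i | i <;> rcases j with j | j <;> rfl
      rw [e]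
      exact ((comp_posSemidef hS').submatrix g).transpose
    have := unflat_mem (by simpa using hp3) h (fun x₀ x₁ y => ⟨y, ![x₀, x₁], fun i k => by
      fin_cases k <;> simp [h, pv, mul_comm]⟩) hρ
    convert this using 1
    ext i j k l
    fin_cases k <;> fin_cases l <;> rfl
end
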